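/- arXiv:2310.19330 — 2 statements merged into one kernel-verified Lean document; each statement's English description precedes it below -/
import Mathlib

section
/- Let 0 < T ≤ ∞, let γ ∈ (0, 1/4), and let u be a smooth function on (0,T) × ℝⁿ solving the heat equation ∂ₜu = Δu. Suppose (i) for all 0 < a < b < T there exists C(a,b) > 0 such that for every R > 0, (∫ₐᵇ ∫_{B(0,R)} |u(t,x)|² dt dx)^{1/2} ≤ C(a,b)·exp(γR²/(b−a)); and (ii) there exists a sequence (t_k) of times in (0,T) tending to 0 such that the sequence of tempered distributions (u(t_k)) is bounded in 𝒮′(ℝⁿ), i.e. for every Schwartz function φ the sequence (⟨u(t_k), φ⟩) is bounded. Then there exists a unique tempered distribution u₀ ∈ 𝒮′(ℝⁿ) such that u(t) = e^{tΔ}u₀ for all 0 < t < T, where the heat semigroup acts on 𝒮′(ℝⁿ) by duality. -/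
open MeasureTheory Metric Filter Set
open scoped Real ENNReal Topology

noncomputable section

abbrev ES (n : ℕ) := EuclideanSpace ℝ (Fin n)

/-- The heat semigroup `e^{tΔ}` applied to a function `h`:
`(e^{tΔ}h)(x) = ∫ (4πt)^{-n/2} exp(-|x-y|²/(4t)) h(y) dy`. -/
def heatOp (n : ℕ) (t : ℝ) (h : ES n → ℝ) (x : ES n) : ℝ :=
  ∫ y : ES n, (4 * Real.pi * t) ^ (-(n : ℝ) / 2) * Real.exp (-‖x - y‖ ^ 2 / (4 * t)) * h y

/-- The Laplacian of `f`, as the sum of its second partial derivatives. -/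
def heatLap (n : ℕ) (f : ES n → ℝ) (x : ES n) : ℝ :=
  ∑ i : Fin n,
    fderiv ℝ (fun y => fderiv ℝ f y (EuclideanSpace.single i 1)) x (EuclideanSpace.single i 1)

lemma schwartz_tsum {n : ℕ} (g : ℕ → SchwartzMap (ES n) ℝ)
    (h : ∀ k m : ℕ, Summable (fun i => SchwartzMap.seminorm ℝ k m (g i))) :
    ∃ G : SchwartzMap (ES n) ℝ, (∀ x, G x = ∑' i, g i x) ∧
      ∀ k m : ℕ, SchwartzMap.seminorm ℝ k m G ≤ ∑' i, SchwartzMap.seminorm ℝ k m (g i) := by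
  have hb : ∀ (k : ℕ) (i : ℕ) (x : ES n), (k : ℕ∞) ≤ (⊤ : ℕ∞) →
      ‖iteratedFDeriv ℝ k (g i) x‖ ≤ SchwartzMap.seminorm ℝ 0 k (g i) := by
    intro k i x _
    exact SchwartzMap.norm_iteratedFDeriv_le_seminorm ℝ (g i) k x
  have hsm : ContDiff ℝ (⊤ : ℕ∞) (fun x => ∑' i, g i x) :=
    contDiff_tsum (N := ⊤) (fun i => (g i).smooth ⊤) (fun k _ => h 0 k) hb
  have hit : ∀ (k : ℕ) (x : ES n), iteratedFDeriv ℝ k (fun y => ∑' i, g i y) x =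
      ∑' i, iteratedFDeriv ℝ k (g i) x := fun k x =>
    iteratedFDeriv_tsum_apply (N := ⊤) (fun i => (g i).smooth ⊤) (fun k _ => h 0 k) hb le_top x
  have key : ∀ (k m : ℕ) (x : ES n), ‖x‖ ^ k * ‖iteratedFDeriv ℝ m (fun y => ∑' i, g i y) x‖ ≤
      ∑' i, SchwartzMap.seminorm ℝ k m (g i) := by
    intro k m x
    have hs : Summable (fun i => ‖iteratedFDeriv ℝ m (g i) x‖) :=
      Summable.of_nonneg_of_le (fun i => norm_nonneg _) (fun i => hb m i x le_top) (h 0 m)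
    rw [hit]
    calc ‖x‖ ^ k * ‖∑' i, iteratedFDeriv ℝ m (g i) x‖
        ≤ ‖x‖ ^ k * ∑' i, ‖iteratedFDeriv ℝ m (g i) x‖ := by
          gcongr; exact norm_tsum_le_tsum_norm hs
      _ = ∑' i, ‖x‖ ^ k * ‖iteratedFDeriv ℝ m (g i) x‖ := by rw [tsum_mul_left]
      _ ≤ _ := (hs.mul_left _).tsum_le_tsum (fun i => SchwartzMap.le_seminorm ℝ k m (g i) x) (h k m)
  refine ⟨⟨fun x => ∑' i, g i x, hsm, fun k m => ⟨_, key k m⟩⟩, fun x => rfl, fun k m => ?_⟩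
  exact SchwartzMap.seminorm_le_bound ℝ k m _ (tsum_nonneg fun i => apply_nonneg _ _) (key k m)

lemma schwartz_tendsto_iff {n : ℕ} {ι : Type*} {l : Filter ι} (f : ι → SchwartzMap (ES n) ℝ)
    (g : SchwartzMap (ES n) ℝ)
    (h : ∀ k m : ℕ, Tendsto (fun i => SchwartzMap.seminorm ℝ k m (f i - g)) l (𝓝 0)) :
    Tendsto f l (𝓝 g) := by
  rw [(schwartz_withSeminorms ℝ (ES n) ℝ).tendsto_nhds]
  intro p ε hε
  exact (h p.1 p.2).eventually (gt_mem_nhds hε)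

instance schwartz_complete (n : ℕ) : CompleteSpace (SchwartzMap (ES n) ℝ) := by
  have : (uniformity (SchwartzMap (ES n) ℝ)).IsCountablyGenerated :=
    IsUniformAddGroup.uniformity_countably_generated
  let V : ℕ → Set (SchwartzMap (ES n) ℝ) := fun N =>
    ((Finset.Iic (N, N)).sup (schwartzSeminormFamily ℝ (ES n) ℝ)).ball 0 ((1/2) ^ N)
  refine UniformSpace.complete_of_convergent_controlled_sequences
    (fun N => {p | p.2 - p.1 ∈ V N}) ?_ ?_
  · intro N
    have : V N ∈ 𝓝 (0 : SchwartzMap (ES n) ℝ) :=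
      (schwartz_withSeminorms ℝ (ES n) ℝ).mem_nhds_iff 0 _ |>.2 ⟨_, _, by positivity, subset_rfl⟩
    rw [uniformity_eq_comap_nhds_zero]
    exact ⟨_, this, fun p hp => hp⟩
  · intro f hf
    have hle : ∀ k m i : ℕ, k + m ≤ i →
        SchwartzMap.seminorm ℝ k m (f (i+1) - f i) ≤ (1/2)^i := by
      intro k m i hi
      have h1 := hf i i (i+1) le_rfl (by omega)
      simp only [V, mem_ofPred_eq, Seminorm.mem_ball, sub_zero] at h1
      refine le_trans ?_ h1.le
      have : (schwartzSeminormFamily ℝ (ES n) ℝ) (k, m) ≤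
        (Finset.Iic (i, i)).sup (schwartzSeminormFamily ℝ (ES n) ℝ) :=
        Finset.le_sup (f := schwartzSeminormFamily ℝ (ES n) ℝ)
          (Finset.mem_Iic.2 (Prod.mk_le_mk.2 ⟨by omega, by omega⟩))
      exact this _
    have hsum : ∀ k m : ℕ, Summable (fun i => SchwartzMap.seminorm ℝ k m (f (i+1) - f i)) := by
      intro k m
      rw [← summable_nat_add_iff (k + m)]
      refine Summable.of_nonneg_of_le (fun i => apply_nonneg _ _)
        (fun i => hle k m (i + (k+m)) (by omega)) ?_
      exact (summable_nat_add_iff (k+m)).2 (summable_geometric_of_lt_one (by norm_num) (by norm_num))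
    have hN : ∀ N : ℕ, ∃ G : SchwartzMap (ES n) ℝ,
        (∀ x, G x = ∑' i, (f (i+N+1) - f (i+N)) x) ∧
      ∀ k m : ℕ, SchwartzMap.seminorm ℝ k m G ≤
        ∑' i, SchwartzMap.seminorm ℝ k m (f (i+N+1) - f (i+N)) := fun N =>
      schwartz_tsum (fun i => f (i+N+1) - f (i+N)) (fun k m => (summable_nat_add_iff N).2 (hsum k m))
    choose G hG hGs using hN
    have hGN : ∀ N, f 0 + G 0 - f N = G N := by
      intro N
      ext x
      have hs : Summable (fun i => (f (i+1) - f i) x) := by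
        refine Summable.of_norm_bounded (hsum 0 0) (fun i => ?_)
        exact SchwartzMap.norm_le_seminorm ℝ _ x
      have h2 := hs.sum_add_tsum_nat_add N
      have h3 : ∑ i ∈ Finset.range N, (f (i+1) - f i) x = f N x - f 0 x := by
        rw [← Finset.sum_range_sub (fun i => f i x)]
        rfl
      rw [h3] at h2
      have h4 := hG N x
      have h5 := hG 0 x
      simp only [add_zero] at h5
      rw [← h5, ← h4] at h2
      show f 0 x + G 0 x - f N x = G N x
      linarith
    refine ⟨f 0 + G 0, schwartz_tendsto_iff _ _ fun k m => ?_⟩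
    have h6 : Tendsto (fun N => ∑' i, SchwartzMap.seminorm ℝ k m (f (i+N+1) - f (i+N)))
        atTop (𝓝 0) :=
      tendsto_sum_nat_add (fun i => SchwartzMap.seminorm ℝ k m (f (i+1) - f i))
    refine squeeze_zero (fun N => apply_nonneg _ _) (fun N => ?_) h6
    rw [← neg_sub, map_neg_eq_map, hGN]
    exact hGs N k m

lemma schwartz_ubp {n : ℕ} {ι : Type*} (L : ι → SchwartzMap (ES n) ℝ →L[ℝ] ℝ)
    (h : ∀ φ, ∃ A : ℝ, ∀ i, |L i φ| ≤ A) :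
    ∃ (s : Finset (ℕ × ℕ)) (C : ℝ), 0 ≤ C ∧ ∀ i φ,
      |L i φ| ≤ C * s.sup (schwartzSeminormFamily ℝ (ES n) ℝ) φ := by
  have : (uniformity (SchwartzMap (ES n) ℝ)).IsCountablyGenerated :=
    IsUniformAddGroup.uniformity_countably_generated
  have : BarrelledSpace ℝ (SchwartzMap (ES n) ℝ) := inferInstance
  have hbdd : BddAbove (range fun i => (normSeminorm ℝ ℝ).comp (L i).toLinearMap) := by
    rw [Seminorm.bddAbove_range_iff]
    intro φ
    obtain ⟨A, hA⟩ := h φ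
    exact ⟨A, by rintro _ ⟨i, rfl⟩; exact hA i⟩
  have hc := Seminorm.continuous_iSup (fun i => (normSeminorm ℝ ℝ).comp (L i).toLinearMap)
    (fun i => (L i).continuous.norm) hbdd
  rw [← Seminorm.coe_iSup_eq hbdd] at hc
  obtain ⟨s, C, -, hC⟩ := Seminorm.bound_of_continuous (schwartz_withSeminorms ℝ (ES n) ℝ) _ hc
  refine ⟨s, C, C.2, fun i φ => ?_⟩
  exact (le_ciSup hbdd i φ).trans (hC φ)

lemma schwartz_pairing {n : ℕ} (v : ES n → ℝ) (hv : Continuous v)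
    (hint : ∀ φ : SchwartzMap (ES n) ℝ, Integrable (fun x => v x * φ x)) :
    ∃ L : SchwartzMap (ES n) ℝ →L[ℝ] ℝ, ∀ φ, L φ = ∫ x, v x * φ x := by
  have hK : ∀ N : ℕ, ∃ L : SchwartzMap (ES n) ℝ →L[ℝ] ℝ,
      ∀ φ, L φ = ∫ x in closedBall 0 N, v x * φ x := by
    intro N
    refine ⟨SchwartzMap.mkCLMtoNormedSpace (fun φ => ∫ x in closedBall 0 N, v x * φ x) ?_ ?_ ?_,
      fun φ => rfl⟩
    · intro f g
      rw [← integral_add (hint f).integrableOn (hint g).integrableOn]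
      congr 1; ext x; simp [mul_add]
    · intro a f
      simp only [RingHom.id_apply, smul_eq_mul]
      rw [← integral_const_mul]
      congr 1; ext x; simp; ring
    · have hvi : IntegrableOn (fun x => ‖v x‖) (closedBall 0 N) :=
        (hv.norm.continuousOn).integrableOn_compact (isCompact_closedBall _ _)
      refine ⟨{(0,0)}, ∫ x in closedBall 0 N, ‖v x‖, integral_nonneg fun _ => norm_nonneg _, ?_⟩
      intro f
      simp only [Finset.sup_singleton]
      refine (norm_integral_le_integral_norm _).trans ?_
      rw [← integral_mul_const]
      refine integral_mono (hint f).integrableOn.norm (hvi.mul_const _) (fun x => ?_)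
      simp only [norm_mul]
      gcongr
      exact SchwartzMap.norm_le_seminorm ℝ f x
  choose L hL using hK
  obtain ⟨s, C, hC, hb⟩ := schwartz_ubp L (fun φ => ⟨∫ x, |v x * φ x|, fun N => by
    rw [hL]
    refine (abs_integral_le_integral_abs).trans ?_
    exact setIntegral_le_integral (hint φ).abs (Eventually.of_forall fun x => abs_nonneg _)⟩)
  refine ⟨SchwartzMap.mkCLMtoNormedSpace (fun φ => ∫ x, v x * φ x) ?_ ?_ ⟨s, C, hC, ?_⟩,
      fun φ => rfl⟩
  · intro f g
    rw [← integral_add (hint f) (hint g)]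
    congr 1; ext x; simp [mul_add]
  · intro a f
    simp only [RingHom.id_apply, smul_eq_mul]
    rw [← integral_const_mul]
    congr 1; ext x; simp; ring
  · intro φ
    have ht : Tendsto (fun N : ℕ => L N φ) atTop (𝓝 (∫ x, v x * φ x)) := by
      simp only [hL]
      have := tendsto_setIntegral_of_monotone (μ := volume) (s := fun N : ℕ => closedBall (0 : ES n) N)
        (f := fun x => v x * φ x) (fun N => measurableSet_closedBall)
        (fun a b hab => closedBall_subset_closedBall (by exact_mod_cast hab))
        (hint φ).integrableOn
      rwa [iUnion_closedBall_nat, setIntegral_univ] at this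
    exact le_of_tendsto ht.norm (Eventually.of_forall fun N => hb N φ)

lemma integral_family {n : ℕ} (N : ℕ) : ∀ {F : Type} [NormedAddCommGroup F] [NormedSpace ℝ F]
    (Φ : ES n → ES n → F) (_ : ∀ z, ContDiff ℝ (⊤ : ℕ∞) (Φ z))
    (B : ℕ → ES n → ℝ) (_ : ∀ m, Integrable (B m))
    (_ : ∀ m x, AEStronglyMeasurable (fun z => iteratedFDeriv ℝ m (Φ z) x))
    (_ : ∀ m z x, ‖iteratedFDeriv ℝ m (Φ z) x‖ ≤ B m z),
    ContDiff ℝ N (fun x => ∫ z, Φ z x) ∧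
      ∀ x, ‖iteratedFDeriv ℝ N (fun x => ∫ z, Φ z x) x‖ ≤ ∫ z, ‖iteratedFDeriv ℝ N (Φ z) x‖ := by
  induction N with
  | zero =>
    intro F _ _ Φ hs B hB hm hb
    have hm0 : ∀ x, AEStronglyMeasurable (fun z => Φ z x) := by
      intro x
      have := (ContinuousMultilinearMap.apply ℝ (fun _ : Fin 0 => ES n) F 0).continuous.comp_aestronglyMeasurable (hm 0 x)
      simpa using this
    refine ⟨?_, fun x => ?_⟩
    · rw [Nat.cast_zero, contDiff_zero]
      refine continuous_of_dominated (bound := B 0) hm0 (fun x => Eventually.of_forall fun z => ?_) (hB 0)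
        (Eventually.of_forall fun z => (hs z).continuous)
      simpa using hb 0 z x
    · simpa using norm_integral_le_integral_norm _
  | succ N ih =>
    intro F _ _ Φ hs B hB hm hb
    have hm0 : ∀ x, AEStronglyMeasurable (fun z => Φ z x) := by
      intro x
      have := (ContinuousMultilinearMap.apply ℝ (fun _ : Fin 0 => ES n) F 0).continuous.comp_aestronglyMeasurable (hm 0 x)
      simpa using this
    have hsf : ∀ z, ContDiff ℝ (⊤ : ℕ∞) (fderiv ℝ (Φ z)) := fun z =>
      (contDiff_infty_iff_fderiv.1 (hs z)).2
    have hmf : ∀ m x, AEStronglyMeasurable (fun z => iteratedFDeriv ℝ m (fderiv ℝ (Φ z)) x) := by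
      intro m x
      have := (continuousMultilinearCurryRightEquiv' ℝ m (ES n) F).continuous.comp_aestronglyMeasurable
        (hm (m+1) x)
      refine this.congr (Eventually.of_forall fun z => ?_)
      simp only [iteratedFDeriv_succ_eq_comp_right, Function.comp_apply,
        LinearIsometryEquiv.apply_symm_apply]
    have hmf0 : ∀ x, AEStronglyMeasurable (fun z => fderiv ℝ (Φ z) x) := by
      intro x
      have := (ContinuousMultilinearMap.apply ℝ (fun _ : Fin 0 => ES n) (ES n →L[ℝ] F) 0).continuous.comp_aestronglyMeasurable (hmf 0 x)
      simpa using this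
    have hbf : ∀ m z x, ‖iteratedFDeriv ℝ m (fderiv ℝ (Φ z)) x‖ ≤ B (m+1) z := by
      intro m z x
      rw [norm_iteratedFDeriv_fderiv]; exact hb _ _ _
    have hder : ∀ x, HasFDerivAt (fun x => ∫ z, Φ z x) (∫ z, fderiv ℝ (Φ z) x) x := by
      intro x
      refine hasFDerivAt_integral_of_dominated_of_fderiv_le (F := fun x z => Φ z x)
        (F' := fun x z => fderiv ℝ (Φ z) x) (s := univ) (bound := B 1) univ_mem
        (Eventually.of_forall hm0) ?_ (hmf0 x)
        (Eventually.of_forall fun z x _ => ?_) (hB 1)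
        (Eventually.of_forall fun z x _ => ?_)
      · exact (hB 0).mono' (hm0 x) (Eventually.of_forall fun z => by simpa using hb 0 z x)
      · simpa using hbf 0 z x
      · exact ((hs z).differentiable (by simp)).differentiableAt.hasFDerivAt
    have hfd : fderiv ℝ (fun x => ∫ z, Φ z x) = fun x => ∫ z, fderiv ℝ (Φ z) x :=
      funext fun x => (hder x).fderiv
    obtain ⟨h1, h2⟩ := ih (fun z => fderiv ℝ (Φ z)) hsf (fun m => B (m+1)) (fun m => hB _) hmf hbf
    refine ⟨?_, fun x => ?_⟩
    · rw [Nat.cast_add, Nat.cast_one, contDiff_succ_iff_fderiv]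
      refine ⟨fun x => (hder x).differentiableAt, by simp, ?_⟩
      rw [hfd]; exact h1
    · rw [← norm_iteratedFDeriv_fderiv, hfd]
      simpa only [norm_iteratedFDeriv_fderiv] using h2 x

lemma integral_schwartz {n : ℕ} (Φ : ES n → ES n → ℝ) (hs : ∀ z, ContDiff ℝ (⊤ : ℕ∞) (Φ z))
    (B : ℕ → ℕ → ES n → ℝ) (hB : ∀ k m, Integrable (B k m))
    (hm : ∀ m x, AEStronglyMeasurable (fun z => iteratedFDeriv ℝ m (Φ z) x))
    (hb : ∀ k m z x, ‖x‖ ^ k * ‖iteratedFDeriv ℝ m (Φ z) x‖ ≤ B k m z) :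
    ∃ ψ : SchwartzMap (ES n) ℝ, (∀ x, ψ x = ∫ z, Φ z x) ∧
      ∀ k m, SchwartzMap.seminorm ℝ k m ψ ≤ ∫ z, B k m z := by
  have hb0 : ∀ m z x, ‖iteratedFDeriv ℝ m (Φ z) x‖ ≤ B 0 m z := by
    intro m z x; simpa using hb 0 m z x
  have key := fun N => integral_family N Φ hs (B 0) (hB 0) hm hb0
  have hB0 : ∀ k m z, 0 ≤ B k m z := fun k m z => le_trans (by positivity) (hb k m z 0)
  have hkey : ∀ k m x, ‖x‖ ^ k * ‖iteratedFDeriv ℝ m (fun x => ∫ z, Φ z x) x‖ ≤ ∫ z, B k m z := by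
    intro k m x
    calc _ ≤ ‖x‖ ^ k * ∫ z, ‖iteratedFDeriv ℝ m (Φ z) x‖ := by gcongr; exact (key m).2 x
      _ = ∫ z, ‖x‖ ^ k * ‖iteratedFDeriv ℝ m (Φ z) x‖ := by rw [integral_const_mul]
      _ ≤ _ := by
        refine integral_mono_of_nonneg (Eventually.of_forall fun z => by positivity) (hB k m)
          (Eventually.of_forall fun z => hb k m z x)
  refine ⟨⟨fun x => ∫ z, Φ z x, contDiff_infty.2 fun N => (key N).1, fun k m => ⟨_, hkey k m⟩⟩,
    fun x => rfl, fun k m => ?_⟩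
  exact SchwartzMap.seminorm_le_bound ℝ k m _ (integral_nonneg (hB0 k m)) (hkey k m)

lemma poly_gauss_bound (c : ℝ) (hc : 0 < c) (M : ℕ) :
    ∃ K : ℝ, 0 ≤ K ∧ ∀ r : ℝ, 0 ≤ r → (1 + r) ^ M * Real.exp (-c * r ^ 2) ≤ K := by
  refine ⟨Real.exp (3 * c) * (M.factorial / (2 * c) ^ M), by positivity, fun r hr => ?_⟩
  have h1 := Real.pow_div_factorial_le_exp (2 * c * (1 + r)) (by positivity) M
  have h2 : Real.exp (-c * r ^ 2) ≤ Real.exp (3 * c) * Real.exp (-(2 * c * (1 + r))) := by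
    rw [← Real.exp_add]
    apply Real.exp_le_exp.2
    nlinarith [mul_nonneg hc.le (sq_nonneg (r - 1))]
  calc (1 + r) ^ M * Real.exp (-c * r ^ 2)
      ≤ (1 + r) ^ M * (Real.exp (3 * c) * Real.exp (-(2 * c * (1 + r)))) := by gcongr
    _ = Real.exp (3 * c) * ((M.factorial / (2 * c) ^ M) *
        ((2 * c * (1 + r)) ^ M / M.factorial) * Real.exp (-(2 * c * (1 + r)))) := by
        rw [mul_pow (2 * c)]; field_simp
    _ ≤ Real.exp (3 * c) * ((M.factorial / (2 * c) ^ M) *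
        Real.exp (2 * c * (1 + r)) * Real.exp (-(2 * c * (1 + r)))) := by gcongr
    _ = _ := by rw [mul_assoc (_ / _), ← Real.exp_add]; simp

lemma gauss_schwartz (n : ℕ) (c : ℝ) (hc : 0 < c) :
    ∃ G : SchwartzMap (ES n) ℝ, ∀ x, G x = Real.exp (-c * ‖x‖ ^ 2) := by
  have hf : Function.HasTemperateGrowth (fun x : ES n => -c * ‖x‖ ^ 2) :=
    (Function.HasTemperateGrowth.const (-c)).mul (Function.hasTemperateGrowth_norm_sq _)
  have hsm : ContDiff ℝ (⊤ : ℕ∞) (fun x : ES n => -c * ‖x‖ ^ 2) := hf.1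
  refine ⟨⟨fun x => Real.exp (-c * ‖x‖ ^ 2), hsm.exp, fun k m => ?_⟩, fun x => rfl⟩
  obtain ⟨j, C, hC, hb⟩ := hf.norm_iteratedFDeriv_le_uniform m
  obtain ⟨K, hK, hKb⟩ := poly_gauss_bound c hc (k + j * m)
  refine ⟨m.factorial * (1 + C) ^ m * K, fun x => ?_⟩
  have h1 : ‖iteratedFDeriv ℝ m (Real.exp ∘ fun x : ES n => -c * ‖x‖ ^ 2) x‖ ≤
      m.factorial * Real.exp (-c * ‖x‖ ^ 2) * ((1 + C) * (1 + ‖x‖) ^ j) ^ m := by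
    refine norm_iteratedFDeriv_comp_le (N := (⊤ : ℕ∞)) Real.contDiff_exp hsm (by exact_mod_cast le_top) x ?_ ?_
    · intro i _
      rw [norm_iteratedFDeriv_eq_norm_iteratedDeriv, iteratedDeriv_eq_iterate, Real.iter_deriv_exp]
      simp
    · intro i hi him
      have h3 : (1:ℝ) ≤ (1 + ‖x‖) ^ j := one_le_pow₀ (by linarith [norm_nonneg x])
      have h2 : 1 ≤ (1 + C) * (1 + ‖x‖) ^ j := by nlinarith
      refine (hb i him x).trans (le_trans ?_ (le_self_pow₀ h2 (by omega)))
      gcongr; linarith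
  have h2 : ‖x‖ ^ k ≤ (1 + ‖x‖) ^ k := by gcongr; linarith
  calc _ ≤ (1 + ‖x‖) ^ k * (m.factorial * Real.exp (-c * ‖x‖ ^ 2) * ((1 + C) * (1 + ‖x‖) ^ j) ^ m) := by
        gcongr; exact h1
    _ = m.factorial * (1 + C) ^ m * ((1 + ‖x‖) ^ (k + j * m) * Real.exp (-c * ‖x‖ ^ 2)) := by
        rw [mul_pow, ← pow_mul, pow_add]; ring
    _ ≤ _ := by gcongr; exact hKb _ (norm_nonneg x)

/-- decay of translated Schwartz -/
lemma schwartz_shift_bound {n : ℕ} (P : SchwartzMap (ES n) ℝ) (k m : ℕ) :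
    ∃ K : ℝ, 0 ≤ K ∧ ∀ x y : ES n, ‖x‖ ^ k * ‖iteratedFDeriv ℝ m P (x - y)‖ ≤ K * (1 + ‖y‖) ^ k := by
  refine ⟨2 ^ k * (Finset.Iic (k, m)).sup (fun m => SchwartzMap.seminorm ℝ m.1 m.2) P,
    by positivity, fun x y => ?_⟩
  have h1 := SchwartzMap.one_add_le_sup_seminorm_apply (𝕜 := ℝ) (m := (k, m)) le_rfl le_rfl P (x - y)
  have h2 : ‖x‖ ≤ (1 + ‖x - y‖) * (1 + ‖y‖) := by
    have : ‖x‖ ≤ ‖x - y‖ + ‖y‖ := by simpa using norm_add_le (x - y) y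
    nlinarith [norm_nonneg (x - y), norm_nonneg y, mul_nonneg (norm_nonneg (x - y)) (norm_nonneg y)]
  calc _ ≤ ((1 + ‖x - y‖) * (1 + ‖y‖)) ^ k * ‖iteratedFDeriv ℝ m P (x - y)‖ := by gcongr
    _ = ((1 + ‖x - y‖) ^ k * ‖iteratedFDeriv ℝ m P (x - y)‖) * (1 + ‖y‖) ^ k := by
      rw [mul_pow]; ring
    _ ≤ _ := by gcongr

lemma iteratedFDeriv_smul_shift {n : ℕ} (P : SchwartzMap (ES n) ℝ) (m : ℕ) (a : ℝ) (y x : ES n) :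
    iteratedFDeriv ℝ m (fun x => a * P (x - y)) x = a • iteratedFDeriv ℝ m P (x - y) := by
  have h : ContDiff ℝ m (fun x => P (x - y)) := (P.smooth m).comp (contDiff_id.sub contDiff_const)
  have := iteratedFDeriv_const_smul_apply' (𝕜 := ℝ) (a := a) (h.contDiffAt (x := x))
  simp only [smul_eq_mul] at this
  rw [this, iteratedFDeriv_comp_sub]

lemma conv_schwartz {n : ℕ} (w : ES n → ℝ) (hw : Continuous w)
    (hI : ∀ k : ℕ, Integrable (fun z => (1 + ‖z‖) ^ k * |w z|)) (c : ℝ)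
    (P : SchwartzMap (ES n) ℝ) :
    ∃ ψ : SchwartzMap (ES n) ℝ, ∀ x, ψ x = ∫ z, w z * P (x - c • z) := by
  choose K hK hb using schwartz_shift_bound P
  obtain ⟨ψ, h, -⟩ := integral_schwartz (fun z x => w z * P (x - c • z))
    (fun z => contDiff_const.mul ((P.smooth ⊤).comp (contDiff_id.sub contDiff_const)))
    (fun k m z => K k m * (1 + |c|) ^ k * ((1 + ‖z‖) ^ k * |w z|))
    (fun k m => (hI k).const_mul _)
    (fun m x => by
      simp only [iteratedFDeriv_smul_shift]
      have : Continuous (iteratedFDeriv ℝ m P) := (P.smooth m).continuous_iteratedFDeriv le_rfl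
      exact (hw.smul (this.comp (by fun_prop))).aestronglyMeasurable)
    (fun k m z x => by
      rw [iteratedFDeriv_smul_shift, norm_smul, Real.norm_eq_abs]
      have h1 := hb k m x (c • z)
      rw [norm_smul, Real.norm_eq_abs] at h1
      have h2 : 1 + |c| * ‖z‖ ≤ (1 + |c|) * (1 + ‖z‖) := by nlinarith [abs_nonneg c, norm_nonneg z]
      calc _ = |w z| * (‖x‖ ^ k * ‖iteratedFDeriv ℝ m P (x - c • z)‖) := by ring
        _ ≤ |w z| * (K k m * ((1 + |c|) * (1 + ‖z‖)) ^ k) := by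
          refine mul_le_mul_of_nonneg_left (h1.trans ?_) (abs_nonneg _)
          refine mul_le_mul_of_nonneg_left ?_ (hK k m)
          gcongr
        _ = _ := by rw [mul_pow]; ring)
  exact ⟨ψ, h⟩

lemma schwartz_diff_bound {n : ℕ} (P : SchwartzMap (ES n) ℝ) (k m : ℕ) :
    ∃ K : ℝ, 0 ≤ K ∧ ∀ (M c c' : ℝ) (x z : ES n), |c| ≤ M → |c'| ≤ M →
      ‖x‖ ^ k * ‖iteratedFDeriv ℝ m P (x - c • z) - iteratedFDeriv ℝ m P (x - c' • z)‖ ≤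
       |c - c'| * (K * (1 + M) ^ k * (1 + ‖z‖) ^ (k + 1)) := by
  obtain ⟨K, hK, hb⟩ := schwartz_shift_bound P k (m + 1)
  refine ⟨K, hK, fun M c c' x z hc hc' => ?_⟩
  have hM : 0 ≤ M := (abs_nonneg c).trans hc
  have hd : Differentiable ℝ (iteratedFDeriv ℝ m P) :=
    (P.smooth ⊤).differentiable_iteratedFDeriv (by exact_mod_cast WithTop.coe_lt_top m)
  have hder : ∀ θ ∈ Icc (-M) M, HasDerivWithinAt
      (fun θ : ℝ => (‖x‖ ^ k) • iteratedFDeriv ℝ m P (x - θ • z))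
      ((‖x‖ ^ k) • fderiv ℝ (iteratedFDeriv ℝ m P) (x - θ • z) (-z)) (Icc (-M) M) θ := by
    intro θ _
    refine HasDerivAt.hasDerivWithinAt ?_
    refine HasDerivAt.const_smul (f := fun θ : ℝ => iteratedFDeriv ℝ m P (x - θ • z)) (‖x‖ ^ k) ?_
    refine (hd _).hasFDerivAt.comp_hasDerivAt θ ?_
    simpa using ((hasDerivAt_id θ).smul_const z).const_sub x
  have := (convex_Icc (-M) M).norm_image_sub_le_of_norm_hasDerivWithin_le
    (C := K * (1 + M) ^ k * (1 + ‖z‖) ^ (k + 1)) hder (fun θ hθ => ?_)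
    (abs_le.1 hc') (abs_le.1 hc)
  · rw [← smul_sub, norm_smul, norm_pow, norm_norm, Real.norm_eq_abs] at this
    rw [mul_comm |c - c'|]; exact this
  · rw [norm_smul, norm_pow, norm_norm]
    have hθ' : |θ| ≤ M := abs_le.2 hθ
    have h1 := hb x (θ • z)
    rw [norm_smul, Real.norm_eq_abs] at h1
    have h2 : 1 + |θ| * ‖z‖ ≤ (1 + M) * (1 + ‖z‖) := by
      nlinarith [norm_nonneg z, mul_le_mul_of_nonneg_right hθ' (norm_nonneg z)]
    calc _ ≤ ‖x‖ ^ k * (‖iteratedFDeriv ℝ (m+1) P (x - θ • z)‖ * ‖z‖) := by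
          gcongr
          refine (ContinuousLinearMap.le_opNorm _ _).trans ?_
          rw [norm_fderiv_iteratedFDeriv, norm_neg]
      _ = (‖x‖ ^ k * ‖iteratedFDeriv ℝ (m+1) P (x - θ • z)‖) * ‖z‖ := by ring
      _ ≤ (K * ((1 + M) * (1 + ‖z‖)) ^ k) * (1 + ‖z‖) := by
          refine mul_le_mul (h1.trans ?_) (by linarith) (norm_nonneg z) (by positivity)
          gcongr
      _ = _ := by rw [mul_pow]; ring

lemma conv_diff {n : ℕ} (w : ES n → ℝ) (hw : Continuous w)
    (hI : ∀ k : ℕ, Integrable (fun z => (1 + ‖z‖) ^ k * |w z|)) (M : ℝ)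
    (P : SchwartzMap (ES n) ℝ) (k m : ℕ) :
    ∃ K : ℝ, 0 ≤ K ∧ ∀ (c c' : ℝ) (ψ ψ' : SchwartzMap (ES n) ℝ), |c| ≤ M → |c'| ≤ M →
      (∀ x, ψ x = ∫ z, w z * P (x - c • z)) → (∀ x, ψ' x = ∫ z, w z * P (x - c' • z)) →
      SchwartzMap.seminorm ℝ k m (ψ - ψ') ≤ K * |c - c'| := by
  choose K hK hb using schwartz_diff_bound P
  by_cases hM : 0 ≤ M
  swap
  · exact ⟨0, le_rfl, fun c _ _ _ hc => absurd ((abs_nonneg c).trans hc) hM⟩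
  refine ⟨K k m * (1 + M) ^ k * ∫ z, (1 + ‖z‖) ^ (k+1) * |w z|,
    mul_nonneg (mul_nonneg (hK k m) (by positivity)) (integral_nonneg fun z => by positivity),
    fun c c' ψ ψ' hc hc' hψ hψ' => ?_⟩
  have hit : ∀ m z x, iteratedFDeriv ℝ m (fun x => w z * P (x - c • z) - w z * P (x - c' • z)) x =
      w z • (iteratedFDeriv ℝ m P (x - c • z) - iteratedFDeriv ℝ m P (x - c' • z)) := by
    intro m z x
    have h : ∀ y, ContDiff ℝ m (fun x => w z * P (x - y)) := fun y =>
      contDiff_const.mul ((P.smooth m).comp (contDiff_id.sub contDiff_const))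
    have := iteratedFDeriv_sub_apply (𝕜 := ℝ) ((h (c • z)).contDiffAt (x := x)) ((h (c' • z)).contDiffAt)
    simp only [iteratedFDeriv_smul_shift] at this
    rw [smul_sub, ← this]; rfl
  obtain ⟨χ, h1, h2⟩ := integral_schwartz (fun z x => w z * P (x - c • z) - w z * P (x - c' • z))
    (fun z => (contDiff_const.mul ((P.smooth ⊤).comp (contDiff_id.sub contDiff_const))).sub
      (contDiff_const.mul ((P.smooth ⊤).comp (contDiff_id.sub contDiff_const))))
    (fun k m z => |c - c'| * (K k m * (1 + M) ^ k) * ((1 + ‖z‖) ^ (k+1) * |w z|))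
    (fun k m => (hI (k+1)).const_mul _)
    (fun m x => by
      simp only [hit]
      have : Continuous (iteratedFDeriv ℝ m P) := (P.smooth m).continuous_iteratedFDeriv le_rfl
      exact (hw.smul ((this.comp (by fun_prop)).sub (this.comp (by fun_prop)))).aestronglyMeasurable)
    (fun k m z x => by
      rw [hit, norm_smul, Real.norm_eq_abs]
      have h1 := hb k m M c c' x z hc hc'
      calc _ = |w z| * (‖x‖ ^ k * ‖iteratedFDeriv ℝ m P (x - c • z) - iteratedFDeriv ℝ m P (x - c' • z)‖) := by ring
        _ ≤ |w z| * (|c - c'| * (K k m * (1 + M) ^ k * (1 + ‖z‖) ^ (k + 1))) := by gcongr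
        _ = _ := by ring)
  have hint : ∀ (c : ℝ) (x : ES n), Integrable (fun z => w z * P (x - c • z)) := by
    intro c x
    have := (hI 0).const_mul (SchwartzMap.seminorm ℝ 0 0 P)
    refine this.mono' (hw.mul (P.continuous.comp (by fun_prop))).aestronglyMeasurable
      (Eventually.of_forall fun z => ?_)
    rw [norm_mul, pow_zero, one_mul, mul_comm, Real.norm_eq_abs (w z)]
    gcongr
    exact SchwartzMap.norm_le_seminorm ℝ P _
  have he : ψ - ψ' = χ := by
    ext x
    rw [h1, integral_sub (hint _ _) (hint _ _), ← hψ, ← hψ']; rfl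
  rw [he]
  refine (h2 k m).trans (le_of_eq ?_)
  rw [integral_const_mul]; ring

lemma schwartz_moments {n : ℕ} (G : SchwartzMap (ES n) ℝ) (k : ℕ) :
    Integrable (fun z => (1 + ‖z‖) ^ k * |G z|) := by
  have h : Integrable (fun z => 2 ^ k * (‖G z‖ + ‖z‖ ^ k * ‖G z‖)) :=
    ((G.integrable.norm).add (G.integrable_pow_mul volume k)).const_mul (2 ^ k)
  refine h.mono' (by have := G.continuous; fun_prop) (Eventually.of_forall fun z => ?_)
  rw [Real.norm_of_nonneg (by positivity), ← Real.norm_eq_abs]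
  have h1 : (1 + ‖z‖) ^ k ≤ 2 ^ k * (1 + ‖z‖ ^ k) := by
    have := add_pow_le (zero_le_one) (norm_nonneg z) k
    refine this.trans ?_
    rw [one_pow]
    gcongr
    · norm_num
    · omega
  calc _ ≤ (2 ^ k * (1 + ‖z‖ ^ k)) * ‖G z‖ := by gcongr
    _ = _ := by ring

def hk (n : ℕ) (r : ℝ) (z : ES n) : ℝ :=
  (4 * Real.pi * r) ^ (-(n : ℝ) / 2) * Real.exp (-‖z‖ ^ 2 / (4 * r))

lemma hk_pos {n : ℕ} {r : ℝ} (hr : 0 < r) (z : ES n) : 0 < hk n r z := by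
  unfold hk; positivity

lemma hk_neg {n : ℕ} (r : ℝ) (z : ES n) : hk n r (-z) = hk n r z := by
  simp [hk]

lemma hk_schwartz (n : ℕ) (r : ℝ) (hr : 0 < r) :
    ∃ G : SchwartzMap (ES n) ℝ, ∀ z, G z = hk n r z := by
  obtain ⟨G, hG⟩ := gauss_schwartz n (1 / (4 * r)) (by positivity)
  refine ⟨((4 * Real.pi * r) ^ (-(n : ℝ) / 2) : ℝ) • G, fun z => ?_⟩
  simp only [SchwartzMap.smul_apply, hG, smul_eq_mul, hk]
  congr 2
  ring

lemma heatOp_eq {n : ℕ} (t : ℝ) (h : ES n → ℝ) (x : ES n) :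
    heatOp n t h x = ∫ y, hk n t (x - y) * h y := rfl

lemma hk_scale {n : ℕ} {r : ℝ} (hr : 0 < r) (z : ES n) :
    hk n 1 z = (√r) ^ n * hk n r (√r • z) := by
  unfold hk
  rw [norm_smul, Real.norm_of_nonneg (Real.sqrt_nonneg r), mul_pow, Real.sq_sqrt hr.le,
    Real.mul_rpow (by positivity) hr.le, mul_one]
  have h1 : (√r) ^ n * r ^ (-(n : ℝ) / 2) = 1 := by
    rw [Real.sqrt_eq_rpow, ← Real.rpow_natCast, ← Real.rpow_mul hr.le, ← Real.rpow_add hr]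
    have : (1 / 2 * (n : ℝ) + -(n : ℝ) / 2) = 0 := by ring
    rw [this, Real.rpow_zero]
  have h2 : -(r * ‖z‖ ^ 2) / (4 * r) = -‖z‖ ^ 2 / (4 * 1) := by field_simp
  rw [h2]
  linear_combination (-(4 * π) ^ (-(n : ℝ) / 2) * Real.exp (-‖z‖ ^ 2 / (4 * 1))) * h1

lemma heat_scale {n : ℕ} {r : ℝ} (hr : 0 < r) (h : ES n → ℝ) (x : ES n) :
    ∫ y, hk n r (x - y) * h y = ∫ z, hk n 1 z * h (x - √r • z) := by
  have h0 : 0 < √r := Real.sqrt_pos.2 hr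
  have h1 := integral_sub_left_eq_self (fun y => hk n r y * h (x - y)) volume x
  simp only [sub_sub_cancel] at h1
  rw [h1]
  have h2 := Measure.integral_comp_smul (volume : Measure (ES n))
    (fun y => hk n r y * h (x - y)) (√r)
  simp only [finrank_euclideanSpace, Fintype.card_fin, smul_eq_mul] at h2
  simp_rw [hk_scale hr, mul_assoc, integral_const_mul]
  rw [h2, abs_of_pos (by positivity), ← mul_assoc, mul_inv_cancel₀ (by positivity), one_mul]

lemma hk_integral (n : ℕ) : ∫ z, hk n 1 z = 1 := by
  have h := GaussianFourier.integral_rexp_neg_mul_sq_norm (V := ES n) (b := 1/4) (by norm_num)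
  unfold hk
  rw [integral_const_mul]
  have : ∀ z : ES n, -‖z‖ ^ 2 / (4 * 1) = -(1/4) * ‖z‖ ^ 2 := fun z => by ring
  simp_rw [this]
  rw [h]
  simp only [finrank_euclideanSpace, Fintype.card_fin, mul_one]
  rw [show π / (1/4) = 4 * π by ring, ← Real.rpow_add (by positivity)]
  rw [show (-(n : ℝ) / 2 + (n : ℝ) / 2) = 0 by ring, Real.rpow_zero]

lemma hk_cont {n : ℕ} (r : ℝ) : Continuous (hk n r) := by
  unfold hk; fun_prop

lemma hk_moments (n : ℕ) (r : ℝ) (hr : 0 < r) (k : ℕ) :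
    Integrable (fun z : ES n => (1 + ‖z‖) ^ k * |hk n r z|) := by
  obtain ⟨G, hG⟩ := hk_schwartz n r hr
  simpa [hG] using schwartz_moments G k

lemma hk_integrable (n : ℕ) (r : ℝ) (hr : 0 < r) : Integrable (hk n r) := by
  obtain ⟨G, hG⟩ := hk_schwartz n r hr
  rw [show hk n r = G from funext fun z => (hG z).symm]
  exact G.integrable

/-- The heat semigroup on Schwartz functions (for `t = 0`, the identity). -/
lemma heat_exists {n : ℕ} (φ : SchwartzMap (ES n) ℝ) (t : ℝ) :
    ∃ ψ : SchwartzMap (ES n) ℝ, ∀ x, ψ x = ∫ z, hk n 1 z * φ (x - √t • z) :=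
  conv_schwartz _ (hk_cont 1) (hk_moments n 1 one_pos) _ φ

def hE {n : ℕ} (t : ℝ) (φ : SchwartzMap (ES n) ℝ) : SchwartzMap (ES n) ℝ :=
  (heat_exists φ t).choose

lemma hE_apply {n : ℕ} (t : ℝ) (φ : SchwartzMap (ES n) ℝ) (x : ES n) :
    hE t φ x = ∫ z, hk n 1 z * φ (x - √t • z) := (heat_exists φ t).choose_spec x

lemma hE_heatOp {n : ℕ} {t : ℝ} (ht : 0 < t) (φ : SchwartzMap (ES n) ℝ) (x : ES n) :
    hE t φ x = heatOp n t φ x := by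
  rw [hE_apply, heatOp_eq, heat_scale ht]

lemma hE_zero {n : ℕ} (φ : SchwartzMap (ES n) ℝ) : hE 0 φ = φ := by
  ext x
  rw [hE_apply]
  simp [integral_mul_const, hk_integral]

lemma hE_tendsto {n : ℕ} {ι : Type*} {l : Filter ι} (φ : SchwartzMap (ES n) ℝ) (r : ι → ℝ) (t : ℝ)
    (h : Tendsto r l (𝓝 t)) : Tendsto (fun i => hE (r i) φ) l (𝓝 (hE t φ)) := by
  apply schwartz_tendsto_iff
  intro k m
  obtain ⟨K, hK, hb⟩ := conv_diff _ (hk_cont 1) (hk_moments n 1 one_pos) (√t + 1) φ k m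
  have hs : Tendsto (fun i => √(r i)) l (𝓝 √t) := (Real.continuous_sqrt.tendsto t).comp h
  have h2 : Tendsto (fun i => K * |√(r i) - √t|) l (𝓝 0) := by
    have := ((hs.sub_const √t).abs).const_mul K
    simpa using this
  refine squeeze_zero' (Eventually.of_forall fun i => apply_nonneg _ _) ?_ h2
  filter_upwards [hs.eventually (gt_mem_nhds (show √t < √t + 1 by linarith))] with i hi
  refine hb _ _ _ _ ?_ ?_ (hE_apply _ _) (hE_apply _ _)
  · rw [abs_of_nonneg (Real.sqrt_nonneg _)]; exact hi.le
  · rw [abs_of_nonneg (Real.sqrt_nonneg _)]; linarith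

lemma hk_hasFDerivAt {n : ℕ} (r : ℝ) (x y : ES n) :
    HasFDerivAt (fun y => hk n r (x - y)) ((hk n r (x - y) / (2 * r)) • innerSL ℝ (x - y)) y := by
  have h1 : HasFDerivAt (fun y : ES n => x - y) (-(ContinuousLinearMap.id ℝ (ES n))) y :=
    (hasFDerivAt_id y).const_sub x
  have h2 := h1.norm_sq
  have h3 := ((h2.fun_neg.fun_const_smul ((4 * r)⁻¹)).exp.const_mul ((4 * Real.pi * r) ^ (-(n : ℝ) / 2)))
  refine (h3.congr_fderiv ?_).congr_of_eventuallyEq ?_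
  · ext v
    simp [hk]
    field_simp
    ring_nf
  · filter_upwards with z
    simp only [hk, smul_eq_mul]
    congr 2
    ring

lemma hk_fderiv {n : ℕ} (r : ℝ) (x y : ES n) (i : Fin n) :
    fderiv ℝ (fun y => hk n r (x - y)) y (EuclideanSpace.single i 1) =
      hk n r (x - y) * ((x - y) i / (2 * r)) := by
  rw [(hk_hasFDerivAt r x y).fderiv, ContinuousLinearMap.smul_apply, innerSL_apply_apply,
    EuclideanSpace.inner_single_right]
  simp
  ring

lemma hk_contDiff {n : ℕ} (r : ℝ) (x : ES n) : ContDiff ℝ (⊤ : ℕ∞) (fun y => hk n r (x - y)) := by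
  unfold hk
  exact contDiff_const.mul ((((contDiff_const.sub contDiff_id).norm_sq ℝ).neg.div_const _).exp)

lemma hk_lap {n : ℕ} (r : ℝ) (x y : ES n) :
    heatLap n (fun y => hk n r (x - y)) y =
      hk n r (x - y) * (‖x - y‖ ^ 2 / (4 * r ^ 2) - n / (2 * r)) := by
  unfold heatLap
  have : ∀ i : Fin n, fderiv ℝ (fun y => fderiv ℝ (fun y => hk n r (x - y)) y (EuclideanSpace.single i 1)) y
      (EuclideanSpace.single i 1) = hk n r (x - y) * ((x - y) i ^ 2 / (4 * r ^ 2) - 1 / (2 * r)) := by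
    intro i
    simp_rw [hk_fderiv]
    have h1 : HasFDerivAt (fun y : ES n => (x - y) i / (2 * r))
        (-(2 * r)⁻¹ • EuclideanSpace.proj (𝕜 := ℝ) i) y := by
      have : HasFDerivAt (fun y : ES n => x - y) (-(ContinuousLinearMap.id ℝ (ES n))) y :=
        (hasFDerivAt_id y).const_sub x
      have h := ((EuclideanSpace.proj (𝕜 := ℝ) i : ES n →L[ℝ] ℝ).hasFDerivAt.comp y this).const_mul (2 * r)⁻¹
      refine (h.congr_fderiv ?_).congr_of_eventuallyEq ?_
      · ext v; simp
      · filter_upwards with z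
        simp; ring
    rw [((hk_hasFDerivAt r x y).fun_mul h1).fderiv]
    rw [ContinuousLinearMap.add_apply, ContinuousLinearMap.smul_apply, ContinuousLinearMap.smul_apply, ContinuousLinearMap.smul_apply, ContinuousLinearMap.smul_apply, innerSL_apply_apply,
      EuclideanSpace.inner_single_right]
    simp
    ring
  simp_rw [this]
  rw [← Finset.mul_sum, Finset.sum_sub_distrib, ← Finset.sum_div, ← EuclideanSpace.real_norm_sq_eq]
  simp
  left
  ring

lemma hk_hasDerivAt {n : ℕ} (t τ : ℝ) (h : τ < t) (z : ES n) :
    HasDerivAt (fun τ => hk n (t - τ) z)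
      (-(hk n (t - τ) z * (‖z‖ ^ 2 / (4 * (t - τ) ^ 2) - n / (2 * (t - τ))))) τ := by
  have hr : 0 < t - τ := by linarith
  have h0 : HasDerivAt (fun τ => t - τ) (-1) τ := by simpa using (hasDerivAt_id τ).const_sub t
  have h1 := (h0.const_mul (4 * π)).rpow_const (p := -(n : ℝ) / 2) (Or.inl (by positivity))
  have h2 := ((h0.const_mul 4).fun_inv (by positivity)).const_mul (-‖z‖ ^ 2) |>.exp
  have h3 := h1.mul h2
  refine (h3.congr_deriv ?_).congr_of_eventuallyEq ?_
  · rw [Real.rpow_sub_one (by positivity)]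
    simp only [hk, div_eq_mul_inv]
    field_simp
    ring
  · filter_upwards with s
    simp [hk, div_eq_mul_inv]

lemma lap_mul {n : ℕ} {f g : ES n → ℝ} (hf : ContDiff ℝ (⊤ : ℕ∞) f) (hg : ContDiff ℝ (⊤ : ℕ∞) g) (y : ES n) :
    heatLap n (fun y => f y * g y) y = heatLap n f y * g y +
      2 * ∑ i : Fin n, fderiv ℝ f y (EuclideanSpace.single i 1) * fderiv ℝ g y (EuclideanSpace.single i 1)
      + f y * heatLap n g y := by
  have hfd : ∀ y, DifferentiableAt ℝ f y := fun y => hf.differentiable (by simp) y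
  have hgd : ∀ y, DifferentiableAt ℝ g y := fun y => hg.differentiable (by simp) y
  have hf1 : ∀ i : Fin n, Differentiable ℝ (fun y => fderiv ℝ f y (EuclideanSpace.single i 1)) :=
    fun i => ((hf.fderiv_right (m := (⊤ : ℕ∞)) (by simp)).clm_apply contDiff_const).differentiable (by simp)
  have hg1 : ∀ i : Fin n, Differentiable ℝ (fun y => fderiv ℝ g y (EuclideanSpace.single i 1)) :=
    fun i => ((hg.fderiv_right (m := (⊤ : ℕ∞)) (by simp)).clm_apply contDiff_const).differentiable (by simp)
  unfold heatLap
  rw [Finset.sum_mul, Finset.mul_sum, Finset.mul_sum, ← Finset.sum_add_distrib, ← Finset.sum_add_distrib]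
  refine Finset.sum_congr rfl fun i _ => ?_
  have : (fun y => fderiv ℝ (fun y => f y * g y) y (EuclideanSpace.single i 1)) =
      fun y => f y * fderiv ℝ g y (EuclideanSpace.single i 1) + g y * fderiv ℝ f y (EuclideanSpace.single i 1) := by
    ext y
    rw [fderiv_fun_mul (hfd y) (hgd y)]
    simp
  rw [this]
  rw [fderiv_fun_add ((hfd y).fun_mul (hg1 i y)) ((hgd y).fun_mul (hf1 i y)), fderiv_fun_mul (hfd y) (hg1 i y),
    fderiv_fun_mul (hgd y) (hf1 i y)]
  simp
  ring

lemma green {n : ℕ} {f w : ES n → ℝ} (hf : ContDiff ℝ (⊤ : ℕ∞) f) (hw : ContDiff ℝ (⊤ : ℕ∞) w)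
    (hc : HasCompactSupport w) : ∫ y, heatLap n f y * w y = ∫ y, f y * heatLap n w y := by
  have hd : ∀ {f : ES n → ℝ}, ContDiff ℝ (⊤ : ℕ∞) f → Differentiable ℝ f := fun h => h.differentiable (by simp)
  have h1 : ∀ {f : ES n → ℝ}, ContDiff ℝ (⊤ : ℕ∞) f → ∀ v, ContDiff ℝ (⊤ : ℕ∞) (fun y => fderiv ℝ f y v) :=
    fun h v => (h.fderiv_right (m := (⊤ : ℕ∞)) (by simp)).clm_apply contDiff_const
  have hcs : ∀ {w : ES n → ℝ}, HasCompactSupport w → ∀ v, HasCompactSupport (fun y => fderiv ℝ w y v) :=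
    fun h v => h.fderiv_apply ℝ v
  have hint : ∀ {f w : ES n → ℝ}, ContDiff ℝ (⊤ : ℕ∞) f → ContDiff ℝ (⊤ : ℕ∞) w → HasCompactSupport w →
      Integrable (fun y => f y * w y) := fun h h' h'' =>
    (h.continuous.mul h'.continuous).integrable_of_hasCompactSupport h''.mul_left
  unfold heatLap
  simp_rw [Finset.sum_mul, Finset.mul_sum]
  rw [integral_finsetSum, integral_finsetSum]
  · refine Finset.sum_congr rfl fun i _ => ?_
    have e1 := integral_mul_fderiv_eq_neg_fderiv_mul_of_integrable (μ := (volume : Measure (ES n)))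
      (f := w) (g := fun y => fderiv ℝ f y (EuclideanSpace.single i 1)) (v := EuclideanSpace.single i 1)
      ?_ ?_ ?_ (fun x _ => hd hw x) (fun x _ => hd (h1 hf _) x)
    · have e2 := integral_mul_fderiv_eq_neg_fderiv_mul_of_integrable (μ := (volume : Measure (ES n)))
        (f := fun y => fderiv ℝ w y (EuclideanSpace.single i 1)) (g := f) (v := EuclideanSpace.single i 1)
        ?_ ?_ ?_ (fun x _ => hd (h1 hw _) x) (fun x _ => hd hf x)
      · simp_rw [mul_comm _ (w _), e1, e2, neg_neg, mul_comm]
      · simpa [mul_comm] using hint hf (h1 (h1 hw _) _) (hcs (hcs hc _) _)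
      · simpa [mul_comm] using hint (h1 hf _) (h1 hw _) (hcs hc _)
      · simpa [mul_comm] using hint hf (h1 hw _) (hcs hc _)
    · simpa [mul_comm] using hint (h1 hf _) (h1 hw _) (hcs hc _)
    · simpa [mul_comm] using hint (h1 (h1 hf _) _) hw hc
    · simpa [mul_comm] using hint (h1 hf _) hw hc
  · intro i _
    exact hint hf (h1 (h1 hw _) _) (hcs (hcs hc _) _)
  · intro i _
    exact hint (h1 (h1 hf _) _) hw hc

def SS (n : ℕ) (T : ℝ≥0∞) : Set (ℝ × ES n) := {p : ℝ × ES n | 0 < p.1 ∧ ENNReal.ofReal p.1 < T}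

lemma SS_open (n : ℕ) (T : ℝ≥0∞) : IsOpen (SS n T) :=
  (isOpen_lt continuous_const continuous_fst).inter
    (isOpen_lt (ENNReal.continuous_ofReal.comp continuous_fst) continuous_const)

lemma SS_sub (n : ℕ) {T : ℝ≥0∞} {s b : ℝ} (hs : 0 < s) (hb : ENNReal.ofReal b < T) :
    Icc s b ×ˢ (univ : Set (ES n)) ⊆ SS n T := by
  rintro ⟨τ, y⟩ ⟨h, -⟩
  exact ⟨hs.trans_le h.1, (ENNReal.ofReal_le_ofReal h.2).trans_lt hb⟩

lemma slice_smooth {n : ℕ} {T : ℝ≥0∞} {u : ℝ → ES n → ℝ}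
    (hu : ContDiffOn ℝ (⊤ : ℕ∞) (fun p : ℝ × ES n => u p.1 p.2) (SS n T)) {τ : ℝ} (h0 : 0 < τ)
    (hT : ENNReal.ofReal τ < T) : ContDiff ℝ (⊤ : ℕ∞) (u τ) := by
  rw [← contDiffOn_univ]
  have : ContDiffOn ℝ (⊤ : ℕ∞) (fun y : ES n => (τ, y)) univ :=
    (contDiff_const.prodMk contDiff_id).contDiffOn
  exact hu.comp this (fun y _ => ⟨h0, hT⟩)

lemma lap_joint {n : ℕ} {T : ℝ≥0∞} {u : ℝ → ES n → ℝ}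
    (hu : ContDiffOn ℝ (⊤ : ℕ∞) (fun p : ℝ × ES n => u p.1 p.2) (SS n T))
    (hh : ∀ (t : ℝ) (x : ES n), 0 < t → ENNReal.ofReal t < T →
      HasDerivAt (fun τ => u τ x) (heatLap n (u t) x) t) :
    ContinuousOn (fun p : ℝ × ES n => heatLap n (u p.1) p.2) (SS n T) := by
  have h1 := hu.continuousOn_fderiv_of_isOpen (SS_open n T) (by simp)
  refine (h1.clm_apply (continuousOn_const (c := ((1 : ℝ), (0 : ES n))))).congr ?_
  rintro ⟨τ, y⟩ hp
  have hd : HasFDerivAt (fun p : ℝ × ES n => u p.1 p.2) _ (τ, y) :=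
    ((hu.differentiableOn (by simp)).differentiableAt ((SS_open n T).mem_nhds hp)).hasFDerivAt
  have h2 : HasDerivAt (fun τ : ℝ => (τ, y)) ((1 : ℝ), (0 : ES n)) τ :=
    (hasDerivAt_id τ).prodMk (hasDerivAt_const τ y)
  have h3 : HasDerivAt (fun τ => u τ y) (fderiv ℝ (fun p : ℝ × ES n => u p.1 p.2) (τ, y) (1, 0)) τ :=
    HasFDerivAt.comp_hasDerivAt (l := fun p : ℝ × ES n => u p.1 p.2) τ hd h2
  exact (hh τ y hp.1 hp.2).unique h3

lemma bdd_ball {n : ℕ} {H : ℝ → ES n → ℝ} {a b : ℝ} (R : ℝ)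
    (hH : ContinuousOn (fun p : ℝ × ES n => H p.1 p.2) (Icc a b ×ˢ univ)) :
    ∃ K : ℝ, ∀ τ ∈ Icc a b, ∀ y ∈ ball (0 : ES n) R, ‖H τ y‖ ≤ K := by
  have hc : IsCompact (Icc a b ×ˢ closedBall (0 : ES n) R) := isCompact_Icc.prod (isCompact_closedBall _ _)
  obtain ⟨K, hK⟩ := hc.exists_bound_of_continuousOn (hH.mono (prod_mono_right (subset_univ _)))
  exact ⟨K, fun τ hτ y hy => hK (τ, y) ⟨hτ, ball_subset_closedBall hy⟩⟩

lemma cont_slice {n : ℕ} {H : ℝ → ES n → ℝ} {a b : ℝ}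
    (hH : ContinuousOn (fun p : ℝ × ES n => H p.1 p.2) (Icc a b ×ˢ univ)) {τ : ℝ} (hτ : τ ∈ Icc a b) :
    Continuous (H τ) := by
  rw [← continuousOn_univ]
  exact hH.comp (f := fun y => (τ, y)) (by fun_prop) (fun y _ => ⟨hτ, mem_univ _⟩)

lemma cont_ball {n : ℕ} {H : ℝ → ES n → ℝ} {a b : ℝ} (R : ℝ)
    (hH : ContinuousOn (fun p : ℝ × ES n => H p.1 p.2) (Icc a b ×ˢ univ)) :
    ContinuousOn (fun τ => ∫ y in ball (0 : ES n) R, H τ y) (Icc a b) := by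
  obtain ⟨K, hK⟩ := bdd_ball R hH
  refine continuousOn_of_dominated (bound := fun _ => K) ?_ ?_ ?_ ?_
  · intro τ hτ; exact (cont_slice hH hτ).aestronglyMeasurable
  · intro τ hτ
    exact (ae_restrict_iff' measurableSet_ball).2 (Eventually.of_forall fun y hy => hK τ hτ y hy)
  · exact integrableOn_const measure_ball_lt_top.ne
  · refine Eventually.of_forall fun y => ?_
    exact hH.comp (f := fun τ => (τ, y)) (by fun_prop) (fun τ h => ⟨h, mem_univ _⟩)

lemma deriv_ball {n : ℕ} {H H' : ℝ → ES n → ℝ} {a b : ℝ} (R : ℝ)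
    (hH : ContinuousOn (fun p : ℝ × ES n => H p.1 p.2) (Icc a b ×ˢ univ))
    (hH' : ContinuousOn (fun p : ℝ × ES n => H' p.1 p.2) (Icc a b ×ˢ univ))
    (hd : ∀ τ ∈ Ioo a b, ∀ y, HasDerivAt (fun τ => H τ y) (H' τ y) τ) {τ : ℝ} (hτ : τ ∈ Ioo a b) :
    HasDerivAt (fun τ => ∫ y in ball (0 : ES n) R, H τ y) (∫ y in ball (0 : ES n) R, H' τ y) τ := by
  obtain ⟨K, hK⟩ := bdd_ball R hH'
  obtain ⟨K0, hK0⟩ := bdd_ball R hH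
  refine (hasDerivAt_integral_of_dominated_loc_of_deriv_le (bound := fun _ => K)
    (Ioo_mem_nhds hτ.1 hτ.2) ?_ ?_ ?_ ?_ ?_ ?_).2
  · filter_upwards [Ioo_mem_nhds hτ.1 hτ.2] with s hs
    exact (cont_slice hH (Ioo_subset_Icc_self hs)).aestronglyMeasurable
  · refine IntegrableOn.of_bound measure_ball_lt_top
      (cont_slice hH (Ioo_subset_Icc_self hτ)).aestronglyMeasurable K0 ?_
    exact (ae_restrict_iff' measurableSet_ball).2 (Eventually.of_forall fun y hy => hK0 τ (Ioo_subset_Icc_self hτ) y hy)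
  · exact (cont_slice hH' (Ioo_subset_Icc_self hτ)).aestronglyMeasurable
  · exact (ae_restrict_iff' measurableSet_ball).2 (Eventually.of_forall fun y hy s hs =>
      hK s (Ioo_subset_Icc_self hs) y hy)
  · exact integrableOn_const measure_ball_lt_top.ne
  · exact Eventually.of_forall fun y s hs => hd s hs y

def errK {n : ℕ} (χ : ES n → ℝ) (r : ℝ) (x y : ES n) : ℝ :=
  hk n r (x - y) * (∑ i : Fin n, (x - y) i / r * fderiv ℝ χ y (EuclideanSpace.single i 1) + heatLap n χ y)

lemma lap_support {n : ℕ} {χ : ES n → ℝ} {y : ES n} (hy : y ∉ tsupport χ) : heatLap n χ y = 0 ∧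
    ∀ v, fderiv ℝ χ y v = 0 := by
  have h0 : ∀ y, y ∉ tsupport χ → fderiv ℝ χ y = 0 := fun y hy => by
    by_contra h
    exact hy (support_fderiv_subset ℝ h)
  refine ⟨?_, fun v => by simp [h0 y hy]⟩
  unfold heatLap
  refine Finset.sum_eq_zero fun i _ => ?_
  have : (fun y => fderiv ℝ χ y (EuclideanSpace.single i 1)) =ᶠ[𝓝 y] fun _ => 0 := by
    filter_upwards [(isClosed_tsupport χ).isOpen_compl.mem_nhds hy] with z hz
    simp [h0 z hz]
  rw [this.fderiv_eq]
  simp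

lemma hk_joint {n : ℕ} {t s b : ℝ} (hb : b < t) (x : ES n) :
    ContinuousOn (fun p : ℝ × ES n => hk n (t - p.1) (x - p.2)) (Icc s b ×ˢ univ) := by
  have hne : ∀ p ∈ Icc s b ×ˢ (univ : Set (ES n)), 0 < t - p.1 := by
    rintro ⟨τ, y⟩ ⟨h, -⟩
    have := h.2
    simp only at *
    linarith
  unfold hk
  refine ContinuousOn.mul (ContinuousOn.rpow_const (by fun_prop) fun p hp => Or.inl ?_)
    (Real.continuous_exp.comp_continuousOn (ContinuousOn.div (by fun_prop) (by fun_prop) fun p hp => ?_))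
  · have := hne p hp; positivity
  · have := hne p hp; positivity

lemma lap_cont {n : ℕ} {χ : ES n → ℝ} (hχ : ContDiff ℝ (⊤ : ℕ∞) χ) : Continuous (heatLap n χ) := by
  have h1 : ∀ {f : ES n → ℝ}, ContDiff ℝ (⊤ : ℕ∞) f → ∀ v, ContDiff ℝ (⊤ : ℕ∞) (fun y => fderiv ℝ f y v) :=
    fun h v => (h.fderiv_right (m := (⊤ : ℕ∞)) (by simp)).clm_apply contDiff_const
  unfold heatLap
  exact continuous_finsetSum _ fun i _ => (h1 (h1 hχ _) _).continuous

lemma grad_cont {n : ℕ} {χ : ES n → ℝ} (hχ : ContDiff ℝ (⊤ : ℕ∞) χ) (v : ES n) :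
    Continuous (fun y => fderiv ℝ χ y v) :=
  ((hχ.fderiv_right (m := (⊤ : ℕ∞)) (by simp)).clm_apply contDiff_const).continuous

lemma energy {n : ℕ} {T : ℝ≥0∞} {u : ℝ → ES n → ℝ}
    (hu : ContDiffOn ℝ (⊤ : ℕ∞) (fun p : ℝ × ES n => u p.1 p.2) (SS n T))
    (hh : ∀ (t : ℝ) (x : ES n), 0 < t → ENNReal.ofReal t < T →
      HasDerivAt (fun τ => u τ x) (heatLap n (u t) x) t)
    {χ : ES n → ℝ} (hχ : ContDiff ℝ (⊤ : ℕ∞) χ) (R : ℝ) (hR : tsupport χ ⊆ ball 0 R)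
    {s b t : ℝ} (hs : 0 < s) (hsb : s ≤ b) (hbt : b < t) (hbT : ENNReal.ofReal b < T) (x : ES n) :
    ContinuousOn (fun p : ℝ × ES n => u p.1 p.2 * errK χ (t - p.1) x p.2) (Icc s b ×ˢ univ) ∧
    (∫ y, hk n (t - b) (x - y) * (u b y * χ y)) - (∫ y, hk n (t - s) (x - y) * (u s y * χ y)) =
      ∫ τ in s..b, ∫ y in ball (0 : ES n) R, u τ y * errK χ (t - τ) x y := by
  have hne : ∀ p ∈ Icc s b ×ˢ (univ : Set (ES n)), 0 < t - p.1 := by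
    rintro ⟨τ, y⟩ ⟨h, -⟩
    have := h.2
    simp only at *
    linarith
  have hcs : HasCompactSupport χ := by
    refine (isCompact_closedBall (0 : ES n) R).of_isClosed_subset (isClosed_tsupport _) (hR.trans ball_subset_closedBall)
  have hU : ContinuousOn (fun p : ℝ × ES n => u p.1 p.2) (Icc s b ×ˢ univ) :=
    hu.continuousOn.mono (SS_sub n hs hbT)
  have hL : ContinuousOn (fun p : ℝ × ES n => heatLap n (u p.1) p.2) (Icc s b ×ˢ univ) :=
    (lap_joint hu hh).mono (SS_sub n hs hbT)
  have hK := hk_joint (n := n) (s := s) hbt x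
  have hχc : ContinuousOn (fun p : ℝ × ES n => χ p.2) (Icc s b ×ˢ univ) :=
    (hχ.continuous.comp continuous_snd).continuousOn
  have hE : ContinuousOn (fun p : ℝ × ES n => u p.1 p.2 * errK χ (t - p.1) x p.2) (Icc s b ×ˢ univ) := by
    unfold errK
    refine hU.mul (hK.mul (ContinuousOn.add (continuousOn_finsetSum _ fun i _ => ?_) ?_))
    · refine ContinuousOn.mul (ContinuousOn.div (by fun_prop) (by fun_prop) fun p hp => (hne p hp).ne') ?_
      exact ((grad_cont hχ _).comp continuous_snd).continuousOn
    · exact ((lap_cont hχ).comp continuous_snd).continuousOn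
  refine ⟨hE, ?_⟩
  let H : ℝ → ES n → ℝ := fun τ y => hk n (t - τ) (x - y) * (u τ y * χ y)
  let H' : ℝ → ES n → ℝ := fun τ y =>
    -(hk n (t - τ) (x - y) * (‖x - y‖ ^ 2 / (4 * (t - τ) ^ 2) - n / (2 * (t - τ)))) * (u τ y * χ y) +
    hk n (t - τ) (x - y) * (heatLap n (u τ) y * χ y)
  have hHc : ContinuousOn (fun p : ℝ × ES n => H p.1 p.2) (Icc s b ×ˢ univ) := hK.mul (hU.mul hχc)
  have hHc' : ContinuousOn (fun p : ℝ × ES n => H' p.1 p.2) (Icc s b ×ˢ univ) := by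
    refine ((hK.mul (ContinuousOn.sub (ContinuousOn.div (by fun_prop) (by fun_prop) ?_)
      (ContinuousOn.div (by fun_prop) (by fun_prop) ?_))).neg.mul (hU.mul hχc)).add (hK.mul (hL.mul hχc))
    · intro p hp; have := hne p hp; positivity
    · intro p hp; have := hne p hp; positivity
  have hd : ∀ τ ∈ Ioo s b, ∀ y, HasDerivAt (fun τ => H τ y) (H' τ y) τ := by
    intro τ hτ y
    have h0 : 0 < τ := hs.trans hτ.1
    have h1 : ENNReal.ofReal τ < T := (ENNReal.ofReal_le_ofReal hτ.2.le).trans_lt hbT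
    exact (hk_hasDerivAt t τ (hτ.2.trans hbt) (x - y)).mul ((hh τ y h0 h1).mul_const (χ y))
  have hball : ∀ τ, ∫ y, H τ y = ∫ y in ball (0 : ES n) R, H τ y := by
    intro τ
    rw [setIntegral_eq_integral_of_forall_compl_eq_zero]
    intro y hy
    have : χ y = 0 := image_eq_zero_of_notMem_tsupport fun h => hy (hR h)
    simp [H, this]
  have hid : ∀ τ ∈ Ioo s b, ∫ y in ball (0 : ES n) R, H' τ y =
      ∫ y in ball (0 : ES n) R, u τ y * errK χ (t - τ) x y := by
    intro τ hτ
    have h0 : 0 < τ := hs.trans hτ.1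
    have h1 : ENNReal.ofReal τ < T := (ENNReal.ofReal_le_ofReal hτ.2.le).trans_lt hbT
    have hus := slice_smooth hu h0 h1
    have hg := hk_contDiff (t - τ) x
    have hχz : ∀ y, y ∉ ball (0 : ES n) R → χ y = 0 := fun y hy =>
      image_eq_zero_of_notMem_tsupport fun h => hy (hR h)
    rw [setIntegral_eq_integral_of_forall_compl_eq_zero (fun y hy => by simp [H', hχz y hy]),
      setIntegral_eq_integral_of_forall_compl_eq_zero (fun y hy => by
        have := lap_support (fun h => hy (hR h))
        simp [errK, this.1, this.2])]
    have hgr := green hus (hg.mul hχ) hcs.mul_left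
    have e1 : ∀ y, H' τ y = heatLap n (u τ) y * (hk n (t - τ) (x - y) * χ y) +
        u τ y * (-(heatLap n (fun y => hk n (t - τ) (x - y)) y * χ y)) := by
      intro y; rw [hk_lap]; simp only [H']; ring
    have e2 : ∀ y, u τ y * errK χ (t - τ) x y = u τ y * heatLap n (fun y => hk n (t - τ) (x - y) * χ y) y +
        u τ y * (-(heatLap n (fun y => hk n (t - τ) (x - y)) y * χ y)) := by
      intro y
      rw [lap_mul hg hχ]
      simp_rw [hk_fderiv, errK]
      have : 2 * ∑ i : Fin n, hk n (t - τ) (x - y) * ((x - y) i / (2 * (t - τ))) *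
          fderiv ℝ χ y (EuclideanSpace.single i 1) = hk n (t - τ) (x - y) *
          ∑ i : Fin n, (x - y) i / (t - τ) * fderiv ℝ χ y (EuclideanSpace.single i 1) := by
        rw [Finset.mul_sum, Finset.mul_sum]
        refine Finset.sum_congr rfl fun i _ => ?_
        field_simp
      rw [this]; ring
    simp_rw [e1, e2]
    have hi1 : Integrable (fun y => u τ y * (-(heatLap n (fun y => hk n (t - τ) (x - y)) y * χ y))) := by
      refine Continuous.integrable_of_hasCompactSupport ?_ ?_
      · exact hus.continuous.mul ((lap_cont hg).mul hχ.continuous).neg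
      · refine hcs.mono fun y hy => ?_
        contrapose! hy
        simp [Function.notMem_support.1 hy]
    rw [integral_add _ hi1, integral_add _ hi1]
    · congr 1
    · refine Continuous.integrable_of_hasCompactSupport ?_ ?_
      · exact hus.continuous.mul (lap_cont (hg.mul hχ))
      · refine HasCompactSupport.intro (isCompact_closedBall (0 : ES n) R) fun y hy => ?_
        have : y ∉ tsupport (fun y => hk n (t - τ) (x - y) * χ y) := fun h =>
          hy (ball_subset_closedBall (hR (tsupport_mul_subset_right h)))
        rw [(lap_support this).1, mul_zero]
    · refine Continuous.integrable_of_hasCompactSupport ?_ ?_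
      · exact (lap_cont hus).mul (hg.continuous.mul hχ.continuous)
      · exact (hcs.mul_left).mul_left
  change (∫ y, H b y) - (∫ y, H s y) = _
  rw [hball, hball]
  symm
  apply intervalIntegral.integral_eq_sub_of_hasDerivAt_of_le hsb (cont_ball R hHc)
    (fun τ hτ => (deriv_ball R hHc hHc' hd hτ).congr_deriv (hid τ hτ))
  exact (cont_ball R hE).intervalIntegrable_of_Icc hsb

lemma kernel_bound (n : ℕ) (r0 θ : ℝ) (hr0 : 0 < r0) (hθ : 0 < θ) (hθ1 : θ < 1) :
    ∃ C : ℝ, 0 ≤ C ∧ ∀ r, 0 < r → r ≤ r0 → ∀ z : ES n, 1 ≤ ‖z‖ →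
      hk n r z * (1 + ‖z‖ / r) ≤ C * Real.exp (-θ * ‖z‖ ^ 2 / (4 * r0)) := by
  set c := (1 - θ) / 4 with hc
  have hc0 : 0 < c := by rw [hc]; linarith
  refine ⟨Real.exp c * ((n + 1).factorial / c ^ (n + 1)), by positivity, fun r hr hr1 z hz => ?_⟩
  set q := ‖z‖ ^ 2 / (4 * r) with hq
  have hq0 : 0 < q := by positivity
  have h4q : 4 * q = ‖z‖ ^ 2 / r := by rw [hq]; field_simp
  have hr2 : 1 / r ≤ 4 * q := by
    rw [h4q]; gcongr; nlinarith
  have hz2 : ‖z‖ / r ≤ 4 * q := by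
    rw [h4q]; gcongr; nlinarith
  have hpre : (4 * Real.pi * r) ^ (-(n : ℝ) / 2) ≤ (1 + 4 * q) ^ n := by
    rw [neg_div, Real.rpow_neg (by positivity), ← Real.inv_rpow (by positivity)]
    calc (4 * π * r)⁻¹ ^ ((n : ℝ) / 2) ≤ (1 + 4 * q) ^ ((n : ℝ) / 2) := by
          gcongr
          have : (4 * π * r)⁻¹ ≤ r⁻¹ := by
            gcongr
            nlinarith [Real.pi_gt_three]
          rw [one_div] at hr2
          linarith
      _ ≤ (1 + 4 * q) ^ (n : ℝ) := by
          apply Real.rpow_le_rpow_of_exponent_le (by linarith)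
          have : (0 : ℝ) ≤ n := n.cast_nonneg
          linarith
      _ = _ := Real.rpow_natCast _ _
  have hexp := Real.pow_div_factorial_le_exp (c * (1 + 4 * q)) (by positivity) (n + 1)
  have h1 : (1 + 4 * q) ^ (n + 1) ≤ Real.exp (c * (1 + 4 * q)) * ((n + 1).factorial / c ^ (n + 1)) := by
    rw [div_le_iff₀ (by positivity), mul_pow] at hexp
    rw [mul_div_assoc' (Real.exp (c * (1 + 4 * q))), le_div_iff₀ (by positivity)]
    linarith
  have h2 : Real.exp (-‖z‖ ^ 2 / (4 * r)) = Real.exp (-q) := by rw [hq, neg_div]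
  have h3 : -θ * q ≤ -θ * ‖z‖ ^ 2 / (4 * r0) := by
    have : ‖z‖ ^ 2 / (4 * r0) ≤ q := by rw [hq]; gcongr
    rw [mul_div_assoc]
    nlinarith
  calc hk n r z * (1 + ‖z‖ / r) ≤ ((1 + 4 * q) ^ n * Real.exp (-q)) * (1 + 4 * q) := by
        unfold hk; rw [h2]; gcongr
    _ = (1 + 4 * q) ^ (n + 1) * Real.exp (-q) := by ring
    _ ≤ Real.exp (c * (1 + 4 * q)) * ((n + 1).factorial / c ^ (n + 1)) * Real.exp (-q) := by gcongr
    _ = Real.exp c * ((n + 1).factorial / c ^ (n + 1)) * Real.exp (-θ * q) := by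
        have : Real.exp (c * (1 + 4 * q)) * Real.exp (-q) = Real.exp c * Real.exp (-θ * q) := by
          rw [← Real.exp_add, ← Real.exp_add]; congr 1; rw [hc]; ring
        linear_combination ((n + 1).factorial / c ^ (n + 1) : ℝ) * this
    _ ≤ _ := by gcongr

lemma fderiv_scale {n : ℕ} {f : ES n → ℝ} (hf : Differentiable ℝ f) (c : ℝ) (y v : ES n) :
    fderiv ℝ (fun y => f (c • y)) y v = c * fderiv ℝ f (c • y) v := by
  have h1 : HasFDerivAt (fun y : ES n => c • y) (c • ContinuousLinearMap.id ℝ (ES n)) y :=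
    (hasFDerivAt_id y).const_smul c
  have h2 := HasFDerivAt.comp (g := f) y (hf (c • y)).hasFDerivAt h1
  have h3 : HasFDerivAt (fun y => f (c • y)) _ y := h2
  rw [h3.fderiv]
  simp

lemma cutoff (n : ℕ) (κ : ℝ) (hκ : 0 < κ) (hκ1 : κ < 1) :
    ∃ D : ℝ, 0 ≤ D ∧ ∀ R : ℝ, 1 ≤ R → ∃ χ : ES n → ℝ, ContDiff ℝ (⊤ : ℕ∞) χ ∧ tsupport χ ⊆ ball 0 R ∧
      (∀ y, 0 ≤ χ y ∧ χ y ≤ 1) ∧ (∀ y, ‖y‖ ≤ κ * R → χ y = 1) ∧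
      (∀ y i, |fderiv ℝ χ y (EuclideanSpace.single i 1)| ≤ D) ∧ (∀ y, |heatLap n χ y| ≤ D) ∧
      (∀ y, ‖y‖ < κ * R → heatLap n χ y = 0 ∧ ∀ v, fderiv ℝ χ y v = 0) := by
  let f : ContDiffBump (0 : ES n) := ⟨κ, (1 + κ) / 2, hκ, by linarith⟩
  have hf : ContDiff ℝ (⊤ : ℕ∞) (f : ES n → ℝ) := f.contDiff
  have hcs : HasCompactSupport (f : ES n → ℝ) := f.hasCompactSupport
  have hfd := hf.differentiable (by simp)
  have h1 : ∀ v, ContDiff ℝ (⊤ : ℕ∞) (fun y => fderiv ℝ f y v) :=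
    fun v => (hf.fderiv_right (m := (⊤ : ℕ∞)) (by simp)).clm_apply contDiff_const
  have hb1 : ∀ i : Fin n, ∃ D, ∀ y, ‖fderiv ℝ f y (EuclideanSpace.single i 1)‖ ≤ D := fun i =>
    (grad_cont hf _).bounded_above_of_compact_support (hcs.fderiv_apply ℝ _)
  choose D1 hD1 using hb1
  obtain ⟨D2, hD2⟩ := (lap_cont hf).bounded_above_of_compact_support
    (HasCompactSupport.intro hcs fun y hy => (lap_support hy).1)
  have hD10 : ∀ i, 0 ≤ D1 i := fun i => (norm_nonneg _).trans (hD1 i 0)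
  have hD20 : 0 ≤ D2 := (norm_nonneg _).trans (hD2 0)
  refine ⟨∑ i, D1 i + D2, add_nonneg (Finset.sum_nonneg fun i _ => hD10 i) hD20, fun R hR => ?_⟩
  have hR0 : 0 < R := by linarith
  have hRi : R⁻¹ ≤ 1 := inv_le_one_of_one_le₀ hR
  have hRi0 : 0 < R⁻¹ := inv_pos.2 hR0
  have hnorm : ∀ y : ES n, ‖R⁻¹ • y‖ = R⁻¹ * ‖y‖ := fun y => by
    rw [norm_smul, Real.norm_of_nonneg hRi0.le]
  have hlap : ∀ y, heatLap n (fun y => f (R⁻¹ • y)) y = R⁻¹ ^ 2 * heatLap n f (R⁻¹ • y) := by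
    intro y
    unfold heatLap
    rw [Finset.mul_sum]
    refine Finset.sum_congr rfl fun i _ => ?_
    simp_rw [fderiv_scale hfd]
    rw [fderiv_const_mul]
    · rw [ContinuousLinearMap.smul_apply, smul_eq_mul,
        fderiv_scale ((h1 (EuclideanSpace.single i 1)).differentiable (by simp))]
      ring
    · exact (((h1 (EuclideanSpace.single i 1)).differentiable (by simp)).comp
        (differentiable_id.const_smul R⁻¹)) y
  have hone : ∀ y : ES n, ‖y‖ ≤ κ * R → f (R⁻¹ • y) = 1 := by
    intro y hy
    apply f.one_of_mem_closedBall
    rw [mem_closedBall_zero_iff, hnorm]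
    rw [inv_mul_le_iff₀ hR0]
    change ‖y‖ ≤ R * κ
    linarith
  refine ⟨fun y => f (R⁻¹ • y), hf.comp (contDiff_const_smul _), ?_, fun y => ⟨f.nonneg, f.le_one⟩, hone,
    fun y i => ?_, fun y => ?_, fun y hy => ?_⟩
  · have : tsupport (fun y => f (R⁻¹ • y)) ⊆ closedBall 0 ((1 + κ) / 2 * R) := by
      refine closure_minimal (fun y hy => ?_) isClosed_closedBall
      have h2 : R⁻¹ • y ∈ Function.support f := hy
      rw [f.support_eq, mem_ball_zero_iff, hnorm, inv_mul_lt_iff₀ hR0] at h2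
      rw [mem_closedBall_zero_iff]
      change ‖y‖ < R * ((1 + κ) / 2) at h2
      linarith
    refine this.trans (closedBall_subset_ball ?_)
    nlinarith
  · rw [fderiv_scale hfd, abs_mul, abs_of_pos hRi0]
    have := hD1 i (R⁻¹ • y)
    rw [Real.norm_eq_abs] at this
    calc R⁻¹ * |fderiv ℝ f (R⁻¹ • y) (EuclideanSpace.single i 1)| ≤ 1 * D1 i := by gcongr
      _ ≤ _ := by
        have := Finset.single_le_sum (fun i _ => hD10 i) (Finset.mem_univ i)
        linarith
  · rw [hlap, abs_mul, abs_of_pos (by positivity)]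
    have := hD2 (R⁻¹ • y)
    rw [Real.norm_eq_abs] at this
    have h3 : R⁻¹ ^ 2 ≤ 1 := pow_le_one₀ hRi0.le hRi
    calc R⁻¹ ^ 2 * |heatLap n f (R⁻¹ • y)| ≤ 1 * D2 := by gcongr
      _ ≤ _ := by
        have := Finset.sum_nonneg (fun i (_ : i ∈ Finset.univ) => hD10 i)
        linarith
  · have hev : ∀ y : ES n, ‖y‖ < κ * R → (fun y => f (R⁻¹ • y)) =ᶠ[𝓝 y] fun _ => 1 := fun y hy => by
      filter_upwards [isOpen_lt continuous_norm continuous_const |>.mem_nhds hy] with z hz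
      exact hone z (le_of_lt hz)
    have hz : ∀ y : ES n, ‖y‖ < κ * R → ∀ v, fderiv ℝ (fun y => f (R⁻¹ • y)) y v = 0 := fun y hy v => by
      rw [(hev y hy).fderiv_eq]; simp
    refine ⟨?_, hz y hy⟩
    unfold heatLap
    refine Finset.sum_eq_zero fun i _ => ?_
    have : (fun y => fderiv ℝ (fun y => f (R⁻¹ • y)) y (EuclideanSpace.single i 1)) =ᶠ[𝓝 y] fun _ => 0 := by
      filter_upwards [isOpen_lt continuous_norm continuous_const |>.mem_nhds hy] with z hz'
      exact hz z hz' _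
    rw [this.fderiv_eq]; simp

lemma err_bound (n : ℕ) (κ r0 : ℝ) (hκ : 0 < κ) (hκ1 : κ < 1) (hr0 : 0 < r0) (x : ES n) :
    ∃ M : ℝ, 0 ≤ M ∧ ∃ R0 : ℝ, ∀ R : ℝ, R0 ≤ R → 1 ≤ R ∧ ‖x‖ ≤ κ * R ∧
     ∃ χ : ES n → ℝ, ContDiff ℝ (⊤ : ℕ∞) χ ∧ tsupport χ ⊆ ball 0 R ∧
      (∀ y, 0 ≤ χ y ∧ χ y ≤ 1) ∧ (∀ y, ‖y‖ ≤ κ * R → χ y = 1) ∧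
      ∀ r, 0 < r → r ≤ r0 → ∀ y, |errK χ r x y| ≤ M * Real.exp (-κ ^ 5 * R ^ 2 / (4 * r0)) := by
  obtain ⟨C, hC, hCb⟩ := kernel_bound n r0 κ hr0 hκ hκ1
  obtain ⟨D, hD, hDb⟩ := cutoff n κ hκ hκ1
  refine ⟨(n + 1) * D * C, by positivity, 1 + 1 / κ ^ 2 + ‖x‖ / (κ - κ ^ 2), fun R hR => ?_⟩
  have hk2 : 0 < κ - κ ^ 2 := by nlinarith
  have e1 : 0 ≤ 1 / κ ^ 2 := by positivity
  have e2 : 0 ≤ ‖x‖ / (κ - κ ^ 2) := by positivity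
  have hR1 : 1 ≤ R := by linarith
  have hRk : 1 ≤ κ ^ 2 * R := by
    have : 1 / κ ^ 2 ≤ R := by linarith
    rw [div_le_iff₀ (by positivity)] at this
    linarith
  have hRx : ‖x‖ ≤ (κ - κ ^ 2) * R := by
    have : ‖x‖ / (κ - κ ^ 2) ≤ R := by linarith
    rw [div_le_iff₀ hk2] at this
    linarith
  obtain ⟨χ, h1, h2, h3, h4, h5, h6, h7⟩ := hDb R hR1
  refine ⟨hR1, by nlinarith, χ, h1, h2, h3, h4, fun r hr hr1 y => ?_⟩
  by_cases hy : ‖y‖ < κ * R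
  · rw [errK, (h7 y hy).1]
    simp only [(h7 y hy).2]
    simp only [mul_zero, Finset.sum_const_zero, add_zero, abs_zero]
    positivity
  push Not at hy
  have hz : κ ^ 2 * R ≤ ‖x - y‖ := by
    have : ‖y‖ ≤ ‖x - y‖ + ‖x‖ := by
      have := norm_sub_le x (x - y)
      rw [sub_sub_cancel] at this
      linarith
    nlinarith
  have hk0 := hk_pos hr (x - y)
  have hsum : |∑ i : Fin n, (x - y) i / r * fderiv ℝ χ y (EuclideanSpace.single i 1)| ≤ n * (‖x - y‖ / r * D) := by
    refine (Finset.abs_sum_le_sum_abs _ _).trans ?_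
    calc _ ≤ ∑ i : Fin n, ‖x - y‖ / r * D := by
          refine Finset.sum_le_sum fun i _ => ?_
          rw [abs_mul, abs_div, abs_of_pos hr]
          have : |(x - y) i| ≤ ‖x - y‖ := PiLp.norm_apply_le (x - y) i
          gcongr
          exact h5 y i
      _ = _ := by simp
  have hzr : 0 ≤ ‖x - y‖ / r := by positivity
  calc |errK χ r x y| = hk n r (x - y) * |∑ i : Fin n, (x - y) i / r * fderiv ℝ χ y (EuclideanSpace.single i 1) + heatLap n χ y| := by
        rw [errK, abs_mul, abs_of_pos hk0]
    _ ≤ hk n r (x - y) * (n * (‖x - y‖ / r * D) + D) := by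
        gcongr
        exact (abs_add_le _ _).trans (add_le_add hsum (h6 y))
    _ ≤ hk n r (x - y) * ((n + 1) * D * (1 + ‖x - y‖ / r)) := by
        gcongr
        have : (0 : ℝ) ≤ n := n.cast_nonneg
        nlinarith [mul_nonneg this hD, mul_nonneg hzr hD]
    _ = (n + 1) * D * (hk n r (x - y) * (1 + ‖x - y‖ / r)) := by ring
    _ ≤ (n + 1) * D * (C * Real.exp (-κ * ‖x - y‖ ^ 2 / (4 * r0))) := by
        refine mul_le_mul_of_nonneg_left ?_ (by positivity)
        exact hCb r hr hr1 (x - y) (hRk.trans hz)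
    _ ≤ (n + 1) * D * (C * Real.exp (-κ ^ 5 * R ^ 2 / (4 * r0))) := by
        have : (κ ^ 2 * R) ^ 2 ≤ ‖x - y‖ ^ 2 := by gcongr
        have : -κ * ‖x - y‖ ^ 2 ≤ -κ ^ 5 * R ^ 2 := by nlinarith
        have : -κ * ‖x - y‖ ^ 2 / (4 * r0) ≤ -κ ^ 5 * R ^ 2 / (4 * r0) := by gcongr
        have := Real.exp_le_exp.2 this
        gcongr
    _ = _ := by ring

lemma err_int {n : ℕ} {T : ℝ≥0∞} {u : ℝ → ES n → ℝ} {γ : ℝ}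
    (hu : ContDiffOn ℝ (⊤ : ℕ∞) (fun p : ℝ × ES n => u p.1 p.2) (SS n T))
    {s t C R E : ℝ} (hs : 0 < s) (htT : ENNReal.ofReal t < T) (hR : 0 < R)
    (hC : 0 < C) (hE : 0 ≤ E)
    (hsize : Real.sqrt (∫ t in Set.Ioo s t, ∫ x in Metric.ball (0 : ES n) R, (u t x) ^ 2) ≤
        C * Real.exp (γ * R ^ 2 / (t - s)))
    (e : ℝ → ES n → ℝ) {b : ℝ} (hsb : s ≤ b) (hbt : b < t)
    (hc : ContinuousOn (fun p : ℝ × ES n => u p.1 p.2 * e p.1 p.2) (Icc s b ×ˢ univ))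
    (he : ∀ τ ∈ Icc s b, ∀ y, |e τ y| ≤ E) :
    |∫ τ in s..b, ∫ y in ball (0 : ES n) R, u τ y * e τ y| ≤
      E * Real.exp (γ * R ^ 2 / (t - s)) * ((t - s) * (R ^ n * volume.real (ball (0 : ES n) 1)) + C ^ 2) := by
  set lam := Real.exp (γ * R ^ 2 / (t - s)) with hlam
  have hl : 0 < lam := Real.exp_pos _
  have hst : s ≤ t := hsb.trans hbt.le
  have hU : ContinuousOn (fun p : ℝ × ES n => u p.1 p.2) (Icc s t ×ˢ univ) :=
    hu.continuousOn.mono (SS_sub n hs htT)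
  set Q : ℝ → ℝ := fun τ => ∫ y in ball (0 : ES n) R, (u τ y) ^ 2 with hQ
  have hQc : ContinuousOn Q (Icc s t) := cont_ball (H := fun τ y => u τ y ^ 2) R (hU.pow 2)
  have hQ0 : ∀ τ, 0 ≤ Q τ := fun τ => integral_nonneg fun y => sq_nonneg _
  set V := volume.real (ball (0 : ES n) R) with hV
  have hVR : V = R ^ n * volume.real (ball (0 : ES n) 1) := by
    rw [hV, Measure.real, Measure.addHaar_ball_of_pos volume 0 hR, ENNReal.toReal_mul,
      ENNReal.toReal_ofReal (by positivity)]
    simp [Measure.real]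
  have hV0 : 0 ≤ V := measureReal_nonneg
  set g : ℝ → ℝ := fun τ => E * (lam * V + lam⁻¹ * Q τ) with hg
  have hgc : ContinuousOn g (Icc s t) :=
    continuousOn_const.mul (continuousOn_const.add (continuousOn_const.mul hQc))
  have hg0 : ∀ τ, 0 ≤ g τ := fun τ => by have := hQ0 τ; positivity
  have hgi : IntervalIntegrable g volume s t := hgc.intervalIntegrable_of_Icc hst
  have hbd : ∀ τ ∈ Icc s b, ‖∫ y in ball (0 : ES n) R, u τ y * e τ y‖ ≤ g τ := by
    intro τ hτ
    have hτ' : τ ∈ Icc s t := ⟨hτ.1, hτ.2.trans hbt.le⟩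
    have hi2 : IntegrableOn (fun y => u τ y ^ 2) (ball (0 : ES n) R) :=
      (((cont_slice hU hτ').pow 2).continuousOn.integrableOn_compact (isCompact_closedBall 0 R)).mono_set
        ball_subset_closedBall
    calc ‖∫ y in ball (0 : ES n) R, u τ y * e τ y‖ ≤
        ∫ y in ball (0 : ES n) R, E * (lam + lam⁻¹ * (u τ y) ^ 2) := by
          refine norm_integral_le_of_norm_le ?_ (Eventually.of_forall fun y => ?_)
          · exact ((integrableOn_const measure_ball_lt_top.ne).add (hi2.const_mul _)).const_mul _
          · rw [norm_mul, Real.norm_eq_abs, Real.norm_eq_abs, mul_comm]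
            refine mul_le_mul (he τ hτ y) ?_ (abs_nonneg _) hE
            have h1 : lam * lam⁻¹ = 1 := mul_inv_cancel₀ hl.ne'
            have h2 : 0 < lam⁻¹ := inv_pos.2 hl
            have h3 : lam⁻¹ * (lam - |u τ y|) ^ 2 + |u τ y| = lam + lam⁻¹ * (u τ y) ^ 2 - |u τ y| := by
              rw [← sq_abs (u τ y)]
              linear_combination (lam - 2 * |u τ y|) * h1
            nlinarith [mul_nonneg h2.le (sq_nonneg (lam - |u τ y|)), abs_nonneg (u τ y)]
      _ = g τ := by
          have hi1 : Integrable (fun _ : ES n => lam) (volume.restrict (ball (0 : ES n) R)) :=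
            integrableOn_const measure_ball_lt_top.ne
          rw [integral_const_mul, integral_add hi1 (hi2.const_mul _),
            integral_const_mul]
          simp [hg, hV, hQ, mul_comm]
  have hI : ∫ τ in s..t, Q τ ≤ (C * lam) ^ 2 := by
    rw [intervalIntegral.integral_of_le hst, integral_Ioc_eq_integral_Ioo]
    exact (Real.sqrt_le_iff.1 hsize).2
  calc |∫ τ in s..b, ∫ y in ball (0 : ES n) R, u τ y * e τ y| ≤ ∫ τ in s..b, g τ := by
        refine intervalIntegral.norm_integral_le_of_norm_le hsb
          (Eventually.of_forall fun τ hτ => hbd τ (Ioc_subset_Icc_self hτ)) ?_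
        exact (hgc.mono (Icc_subset_Icc_right hbt.le)).intervalIntegrable_of_Icc hsb
    _ ≤ ∫ τ in s..t, g τ :=
        intervalIntegral.integral_mono_interval le_rfl hsb hbt.le (Eventually.of_forall hg0) hgi
    _ = E * (lam * V * (t - s) + lam⁻¹ * ∫ τ in s..t, Q τ) := by
        rw [hg, intervalIntegral.integral_const_mul, intervalIntegral.integral_add,
          intervalIntegral.integral_const]
        · simp only [smul_eq_mul, intervalIntegral.integral_const_mul]; ring
        · simp
        · exact (hQc.intervalIntegrable_of_Icc hst).const_mul _
    _ ≤ E * (lam * V * (t - s) + lam⁻¹ * (C * lam) ^ 2) := by gcongr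
    _ = _ := by rw [hVR]; field_simp

lemma end_limit {n : ℕ} {T : ℝ≥0∞} {u : ℝ → ES n → ℝ}
    (hu : ContDiffOn ℝ (⊤ : ℕ∞) (fun p : ℝ × ES n => u p.1 p.2) (SS n T))
    {χ : ES n → ℝ} (hχ : ContDiff ℝ (⊤ : ℕ∞) χ) (R : ℝ) (hR : tsupport χ ⊆ ball 0 R)
    (h01 : ∀ y, 0 ≤ χ y ∧ χ y ≤ 1)
    {s t : ℝ} (hs : 0 < s) (hst : s < t) (htT : ENNReal.ofReal t < T) (x : ES n) (hx : χ x = 1) :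
    Tendsto (fun b => ∫ y, hk n (t - b) (x - y) * (u b y * χ y)) (𝓝[<] t) (𝓝 (u t x)) := by
  have hU : ContinuousOn (fun p : ℝ × ES n => u p.1 p.2) (Icc s t ×ˢ univ) :=
    hu.continuousOn.mono (SS_sub n hs htT)
  obtain ⟨K, hK⟩ := bdd_ball R hU
  have hK' : ∀ b ∈ Icc s t, ∀ y, |u b y * χ y| ≤ |K| := by
    intro b hb y
    by_cases hy : y ∈ ball (0 : ES n) R
    · rw [abs_mul, abs_of_nonneg (h01 y).1]
      have := hK b hb y hy
      rw [Real.norm_eq_abs] at this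
      have h2 := mul_le_mul this (h01 y).2 (h01 y).1 ((abs_nonneg _).trans this)
      linarith [le_abs_self K]
    · have : χ y = 0 := image_eq_zero_of_notMem_tsupport fun h => hy (hR h)
      simp [this]
  have hIco : ∀ᶠ b in 𝓝[<] t, b ∈ Ico s t := Ico_mem_nhdsLT hst
  have h1 : Tendsto (fun b => ∫ z, hk n 1 z * (u b (x - √(t - b) • z) * χ (x - √(t - b) • z))) (𝓝[<] t)
      (𝓝 (∫ z, hk n 1 z * (u t x * χ x))) := by
    refine tendsto_integral_filter_of_dominated_convergence (fun z => hk n 1 z * |K|) ?_ ?_ ?_ ?_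
    · filter_upwards [hIco] with b hb
      have hc := cont_slice hU (Ico_subset_Icc_self hb)
      have := hχ.continuous
      have := hk_cont (n := n) 1
      exact Continuous.aestronglyMeasurable (by fun_prop)
    · filter_upwards [hIco] with b hb
      refine Eventually.of_forall fun z => ?_
      rw [norm_mul, Real.norm_of_nonneg (hk_pos one_pos z).le, Real.norm_eq_abs]
      exact mul_le_mul_of_nonneg_left (hK' b (Ico_subset_Icc_self hb) _) (hk_pos one_pos z).le
    · exact (hk_integrable n 1 one_pos).mul_const _
    · refine Eventually.of_forall fun z => ?_
      have hp : Tendsto (fun b => (b, x - √(t - b) • z)) (𝓝[<] t) (𝓝 (t, x)) := by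
        have : Continuous (fun b => (b, x - √(t - b) • z)) := by fun_prop
        have h := this.tendsto t
        simp only [sub_self, Real.sqrt_zero, zero_smul, sub_zero] at h
        exact h.mono_left nhdsWithin_le_nhds
      have hm : (t, x) ∈ SS n T := ⟨hs.trans hst, htT⟩
      have hUt : ContinuousAt (fun p : ℝ × ES n => u p.1 p.2) (t, x) :=
        hu.continuousOn.continuousAt ((SS_open n T).mem_nhds hm)
      have hχt : ContinuousAt (fun p : ℝ × ES n => χ p.2) (t, x) :=
        (hχ.continuous.comp continuous_snd).continuousAt
      exact ((hUt.tendsto.comp hp).mul (hχt.tendsto.comp hp)).const_mul _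
  rw [integral_mul_const, hk_integral, hx, one_mul, mul_one] at h1
  refine h1.congr' ?_
  filter_upwards [hIco] with b hb
  exact (heat_scale (sub_pos.2 hb.2) (fun y => u b y * χ y) x).symm

lemma repr_approx {n : ℕ} {T : ℝ≥0∞} {u : ℝ → ES n → ℝ} {γ : ℝ} (hγ : γ ∈ Set.Ioo (0 : ℝ) (1/4))
    (hu : ContDiffOn ℝ (⊤ : ℕ∞) (fun p : ℝ × ES n => u p.1 p.2) (SS n T))
    (hh : ∀ (t : ℝ) (x : ES n), 0 < t → ENNReal.ofReal t < T →
      HasDerivAt (fun τ => u τ x) (heatLap n (u t) x) t)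
    (hsize : ∀ a b : ℝ, 0 < a → a < b → ENNReal.ofReal b < T → ∃ C > 0, ∀ R > 0,
      Real.sqrt (∫ t in Set.Ioo a b, ∫ x in Metric.ball (0 : ES n) R, (u t x) ^ 2) ≤
        C * Real.exp (γ * R ^ 2 / (b - a)))
    {s t : ℝ} (hs : 0 < s) (hst : s < t) (htT : ENNReal.ofReal t < T) (x : ES n) :
    ∃ κ > 0, ∃ A R0 : ℝ, ∀ R : ℝ, R0 ≤ R → 0 < R ∧ ∃ χ : ES n → ℝ, Continuous χ ∧
      (∀ y, 0 ≤ χ y ∧ χ y ≤ 1) ∧ (∀ y, ‖y‖ ≤ κ * R → χ y = 1) ∧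
      |u t x - ∫ y, hk n (t - s) (x - y) * (u s y * χ y)| ≤ A / (1 + R) := by
  obtain ⟨κ, hκ, hκ1, hκ5⟩ : ∃ κ : ℝ, 0 < κ ∧ κ < 1 ∧ 4 * γ < κ ^ 5 := by
    have h1 := hγ.1
    have h2 := hγ.2
    refine ⟨1 + -((1 - 4 * γ) / 10), by linarith, by linarith, ?_⟩
    have := one_add_mul_le_pow (a := -((1 - 4 * γ) / 10)) (by linarith) 5
    norm_num at this ⊢
    linarith
  have hr0 : 0 < t - s := sub_pos.2 hst
  obtain ⟨M, hM, R0, hb⟩ := err_bound n κ (t - s) hκ hκ1 hr0 x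
  obtain ⟨C, hC, hCb⟩ := hsize s t hs hst htT
  set δ := (κ ^ 5 / 4 - γ) / (t - s) with hδ
  have hδ0 : 0 < δ := div_pos (by linarith) hr0
  obtain ⟨K, hK, hKb⟩ := poly_gauss_bound δ hδ0 (n + 1)
  set v := volume.real (ball (0 : ES n) 1) with hv
  have hv0 : 0 ≤ v := measureReal_nonneg
  refine ⟨κ, hκ, M * ((t - s) * v + C ^ 2) * K, R0, fun R hR => ?_⟩
  obtain ⟨hR1, hxR, χ, h1, h2, h3, h4, h5⟩ := hb R hR
  have hRp : 0 < R := by linarith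
  refine ⟨hRp, χ, h1.continuous, h3, h4, ?_⟩
  have hlim := end_limit hu h1 R h2 h3 hs hst htT x (h4 x hxR)
  have hlim2 := (hlim.sub_const (∫ y, hk n (t - s) (x - y) * (u s y * χ y))).abs
  refine le_of_tendsto hlim2 ?_
  filter_upwards [Ico_mem_nhdsLT hst] with b hbt
  have hbT : ENNReal.ofReal b < T := (ENNReal.ofReal_le_ofReal hbt.2.le).trans_lt htT
  obtain ⟨e1, e2⟩ := energy hu hh h1 R h2 hs hbt.1 hbt.2 hbT x
  rw [e2]
  refine (err_int (γ := γ) hu hs htT hRp hC (by positivity) (hCb R hRp) (fun τ y => errK χ (t - τ) x y)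
    hbt.1 hbt.2 e1 (fun τ hτ y => h5 (t - τ) (by linarith [hτ.2, hbt.2]) (by linarith [hτ.1]) y)).trans ?_
  have hexp : Real.exp (-κ ^ 5 * R ^ 2 / (4 * (t - s))) * Real.exp (γ * R ^ 2 / (t - s)) =
      Real.exp (-δ * R ^ 2) := by
    rw [← Real.exp_add]; congr 1; rw [hδ]; field_simp; ring
  have hpoly : (t - s) * (R ^ n * v) + C ^ 2 ≤ ((t - s) * v + C ^ 2) * (1 + R) ^ n := by
    have p1 : R ^ n ≤ (1 + R) ^ n := by gcongr; linarith
    have p2 : 1 ≤ (1 + R) ^ n := one_le_pow₀ (by linarith)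
    have := mul_nonneg hr0.le hv0
    nlinarith [mul_le_mul_of_nonneg_left p1 this, sq_nonneg C]
  rw [le_div_iff₀ (by linarith)]
  calc _ = M * (Real.exp (-κ ^ 5 * R ^ 2 / (4 * (t - s))) * Real.exp (γ * R ^ 2 / (t - s))) *
        ((t - s) * (R ^ n * v) + C ^ 2) * (1 + R) := by ring
    _ ≤ M * Real.exp (-δ * R ^ 2) * (((t - s) * v + C ^ 2) * (1 + R) ^ n) * (1 + R) := by
        rw [hexp]; gcongr
    _ = M * ((t - s) * v + C ^ 2) * ((1 + R) ^ (n + 1) * Real.exp (-δ * R ^ 2)) := by ring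
    _ ≤ _ := by
        have := hKb R hRp.le
        gcongr

lemma repr_heat {n : ℕ} {T : ℝ≥0∞} {u : ℝ → ES n → ℝ} {γ : ℝ} (hγ : γ ∈ Set.Ioo (0 : ℝ) (1/4))
    (hu : ContDiffOn ℝ (⊤ : ℕ∞) (fun p : ℝ × ES n => u p.1 p.2) (SS n T))
    (hh : ∀ (t : ℝ) (x : ES n), 0 < t → ENNReal.ofReal t < T →
      HasDerivAt (fun τ => u τ x) (heatLap n (u t) x) t)
    (hsize : ∀ a b : ℝ, 0 < a → a < b → ENNReal.ofReal b < T → ∃ C > 0, ∀ R > 0,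
      Real.sqrt (∫ t in Set.Ioo a b, ∫ x in Metric.ball (0 : ES n) R, (u t x) ^ 2) ≤
        C * Real.exp (γ * R ^ 2 / (b - a)))
    {s t : ℝ} (hs : 0 < s) (hst : s < t) (htT : ENNReal.ofReal t < T) (x : ES n)
    (hint : Integrable (fun y => hk n (t - s) (x - y) * u s y)) :
    u t x = ∫ y, hk n (t - s) (x - y) * u s y := by
  obtain ⟨κ, hκ, A, R0, hb⟩ := repr_approx hγ hu hh hsize hs hst htT x
  have hb' : ∀ k : ℕ, _ := fun k => hb (R0 + k) (by linarith [k.cast_nonneg (α := ℝ)])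
  choose hpos χ h1 h2 h3 h4 using hb'
  have hR : Tendsto (fun k : ℕ => R0 + (k : ℝ)) atTop atTop :=
    tendsto_atTop_add_const_left _ _ tendsto_natCast_atTop_atTop
  have hl1 : Tendsto (fun k : ℕ => ∫ y, hk n (t - s) (x - y) * (u s y * χ k y)) atTop
      (𝓝 (∫ y, hk n (t - s) (x - y) * u s y)) := by
    refine tendsto_integral_filter_of_dominated_convergence (fun y => ‖hk n (t - s) (x - y) * u s y‖) ?_ ?_ hint.norm ?_
    · refine Eventually.of_forall fun k => ?_
      simp_rw [← mul_assoc]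
      exact hint.aestronglyMeasurable.mul (h1 k).aestronglyMeasurable
    · refine Eventually.of_forall fun k => Eventually.of_forall fun y => ?_
      rw [← mul_assoc, norm_mul, Real.norm_of_nonneg (h2 k y).1]
      exact mul_le_of_le_one_right (norm_nonneg _) (h2 k y).2
    · refine Eventually.of_forall fun y => ?_
      refine tendsto_const_nhds.congr' ?_
      filter_upwards [(hR.const_mul_atTop hκ).eventually_ge_atTop ‖y‖] with k hk
      rw [h3 k y hk, mul_one]
  have hl2 : Tendsto (fun k : ℕ => A / (1 + (R0 + (k : ℝ)))) atTop (𝓝 0) :=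
    tendsto_const_nhds.div_atTop (tendsto_atTop_add_const_left _ _ hR)
  have hl3 := (tendsto_const_nhds (x := u t x)).sub hl1 |>.abs
  have := le_of_tendsto_of_tendsto' hl3 hl2 h4
  exact sub_eq_zero.1 (abs_eq_zero.1 (le_antisymm this (abs_nonneg _)))

lemma hk_comm {n : ℕ} (r : ℝ) (x y : ES n) : hk n r (x - y) = hk n r (y - x) := by
  rw [← hk_neg, neg_sub]

lemma hk_int {n : ℕ} {v : ES n → ℝ} (hI : ∀ φ : SchwartzMap (ES n) ℝ, Integrable (fun x => v x * φ x))
    {r : ℝ} (hr : 0 < r) (x : ES n) : Integrable (fun y => hk n r (x - y) * v y) := by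
  obtain ⟨G, hG⟩ := hk_schwartz n r hr
  have := hI (G.compSubConstCLM ℝ x)
  simp only [SchwartzMap.compSubConstCLM_apply, hG] at this
  refine this.congr (Eventually.of_forall fun y => ?_)
  simp only
  rw [hk_comm, mul_comm]

lemma pairing_heat {n : ℕ} {v U : ES n → ℝ} (hv : Continuous v)
    (hI : ∀ φ : SchwartzMap (ES n) ℝ, Integrable (fun x => v x * φ x))
    {r : ℝ} (hr : 0 < r) (hU : ∀ x, U x = ∫ y, hk n r (x - y) * v y) (φ : SchwartzMap (ES n) ℝ) :
    Integrable (fun x => U x * φ x) ∧ ∫ x, U x * φ x = ∫ y, v y * hE r φ y := by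
  obtain ⟨G, hG⟩ := hk_schwartz n r hr
  obtain ⟨Φ, hΦ⟩ := conv_schwartz (fun z => |φ z|) φ.continuous.abs
    (fun k => by simpa using schwartz_moments φ k) 1 G
  have hΦ' : ∀ y, Φ y = ∫ x, |φ x| * hk n r (y - x) := fun y => by rw [hΦ]; simp [hG]
  have hΦ0 : ∀ y, 0 ≤ Φ y := fun y => by
    rw [hΦ']; exact integral_nonneg fun x => mul_nonneg (abs_nonneg _) (hk_pos hr _).le
  let f : ES n × ES n → ℝ := fun p => v p.2 * (hk n r (p.1 - p.2) * φ p.1)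
  have hfc : Continuous f := by
    have := hk_cont (n := n) r
    have := φ.continuous
    fun_prop
  have hf : Integrable f (volume.prod volume) := by
    rw [integrable_prod_iff' hfc.aestronglyMeasurable]
    refine ⟨Eventually.of_forall fun y => ?_, ?_⟩
    · have h1 : Integrable (fun x => G (x - y)) := (G.compSubConstCLM ℝ y).integrable
      have h2 : Integrable (fun x => G (x - y) * φ x) := by
        exact h1.mul_bdd (c := SchwartzMap.seminorm ℝ 0 0 φ) φ.continuous.aestronglyMeasurable
          (Eventually.of_forall fun x => φ.norm_le_seminorm ℝ x)
      simp only [hG] at h2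
      exact h2.const_mul (v y)
    · have h1 := (hI Φ).norm
      refine h1.congr (Eventually.of_forall fun y => ?_)
      simp only [f, norm_mul]
      rw [integral_const_mul, Real.norm_of_nonneg (hΦ0 y), hΦ']
      congr 1
      refine integral_congr_ae (Eventually.of_forall fun x => ?_)
      simp only
      rw [Real.norm_of_nonneg (hk_pos hr _).le, hk_comm, Real.norm_eq_abs, mul_comm]
  have e1 : ∀ x, ∫ y, f (x, y) = U x * φ x := fun x => by
    rw [hU, ← integral_mul_const]
    refine integral_congr_ae (Eventually.of_forall fun y => ?_)
    simp only [f]; ring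
  have e2 : ∀ y, ∫ x, f (x, y) = v y * hE r φ y := fun y => by
    rw [hE_heatOp hr, heatOp_eq]
    simp only [f]
    rw [integral_const_mul]
    simp_rw [hk_comm r y]
  constructor
  · have := hf.integral_prod_left
    simpa only [e1] using this
  · have := integral_integral_swap (f := fun x y => f (x, y)) hf
    simpa only [e1, e2] using this

lemma ultra_limit {n : ℕ} (L : ℕ → SchwartzMap (ES n) ℝ →L[ℝ] ℝ) (h : ∀ φ, ∃ A : ℝ, ∀ i, |L i φ| ≤ A) :
    ∃ u₀ : SchwartzMap (ES n) ℝ →L[ℝ] ℝ, ∀ (φ : ℕ → SchwartzMap (ES n) ℝ) (ψ : SchwartzMap (ES n) ℝ) (c : ℝ),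
      Tendsto φ atTop (𝓝 ψ) → (∀ᶠ k in atTop, L k (φ k) = c) → u₀ ψ = c := by
  obtain ⟨s, C, hC, hb⟩ := schwartz_ubp L h
  have hle : ((hyperfilter ℕ : Ultrafilter ℕ) : Filter ℕ) ≤ atTop := Nat.hyperfilter_le_atTop
  have hlim : ∀ φ, ∃ a : ℝ, Tendsto (fun k => L k φ) (hyperfilter ℕ : Ultrafilter ℕ) (𝓝 a) := by
    intro φ
    obtain ⟨A, hA⟩ := h φ
    obtain ⟨a, -, ha⟩ := (isCompact_Icc (a := -A) (b := A)).ultrafilter_le_nhds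
      ((hyperfilter ℕ).map (fun k => L k φ)) (by
        rw [le_principal_iff]
        exact Filter.mem_map.2 (Filter.univ_mem' fun k => abs_le.1 (hA k)))
    exact ⟨a, ha⟩
  choose a ha using hlim
  refine ⟨SchwartzMap.mkCLMtoNormedSpace (σ := RingHom.id ℝ) a ?_ ?_ ⟨s, C, hC, ?_⟩, ?_⟩
  · intro f g
    refine tendsto_nhds_unique (ha (f + g)) ?_
    simpa using (ha f).add (ha g)
  · intro c f
    refine tendsto_nhds_unique (ha (c • f)) ?_
    simpa using (ha f).const_mul c
  · intro f
    exact le_of_tendsto (ha f).abs (Eventually.of_forall fun k => hb k f)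
  · intro φ ψ c hφ hc
    change a ψ = c
    refine tendsto_nhds_unique (ha ψ) ?_
    refine Tendsto.mono_left ?_ hle
    have h1 : Tendsto (fun k => L k (φ k) - L k ψ) atTop (𝓝 0) := by
      rw [Metric.tendsto_atTop']
      intro ε hε
      have h2 := ((schwartz_withSeminorms ℝ (ES n) ℝ).tendsto_nhds' φ ψ).1 hφ s (ε / (C + 1)) (by positivity)
      obtain ⟨N, hN⟩ := eventually_atTop.1 h2
      refine ⟨N, fun k hk => ?_⟩
      rw [dist_zero_right, ← map_sub, Real.norm_eq_abs]
      refine (hb k _).trans_lt ?_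
      have h3 := hN k hk.le
      rw [lt_div_iff₀ (by positivity)] at h3
      have h4 : 0 ≤ s.sup (schwartzSeminormFamily ℝ (ES n) ℝ) (φ k - ψ) := apply_nonneg _ _
      linarith
    have h5 : Tendsto (fun k => c - (L k (φ k) - L k ψ)) atTop (𝓝 c) := by
      simpa using h1.const_sub c
    refine h5.congr' ?_
    filter_upwards [hc] with k hk
    rw [hk]; ring

/-- **Representation of solutions to the heat equation.**
If `u` is a smooth solution of the heat equation on `(0,T) × ℝⁿ` satisfying the local `L²`
size condition with Gaussian-type growth `γ < 1/4`, and there is a sequence `tₖ → 0` with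
`(u(tₖ))` bounded in `𝒮'(ℝⁿ)`, then there is a unique tempered distribution `u₀` with
`u(t) = e^{tΔ}u₀` for all `0 < t < T` (in the sense that `⟨u(t), φ⟩ = ⟨u₀, e^{tΔ}φ⟩` for every
Schwartz function `φ`). -/
theorem heat_representation
    (n : ℕ) (T : ℝ≥0∞) (hT : 0 < T) (γ : ℝ) (hγ : γ ∈ Set.Ioo (0 : ℝ) (1/4))
    (u : ℝ → ES n → ℝ)
    (hu_smooth : ContDiffOn ℝ (⊤ : ℕ∞) (fun p : ℝ × ES n => u p.1 p.2)
      {p : ℝ × ES n | 0 < p.1 ∧ ENNReal.ofReal p.1 < T})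
    (hu_heat : ∀ (t : ℝ) (x : ES n), 0 < t → ENNReal.ofReal t < T →
      HasDerivAt (fun τ => u τ x) (heatLap n (u t) x) t)
    -- (i) Size condition
    (hsize : ∀ a b : ℝ, 0 < a → a < b → ENNReal.ofReal b < T → ∃ C > 0, ∀ R > 0,
      Real.sqrt (∫ t in Set.Ioo a b, ∫ x in Metric.ball (0 : ES n) R, (u t x) ^ 2) ≤
        C * Real.exp (γ * R ^ 2 / (b - a)))
    -- (ii) Uniform control: a sequence tₖ → 0 with (u(tₖ)) bounded in 𝒮'(ℝⁿ)
    (hinit : ∃ tk : ℕ → ℝ, (∀ k, 0 < tk k ∧ ENNReal.ofReal (tk k) < T) ∧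
      Tendsto tk atTop (nhds 0) ∧
      ∀ φ : SchwartzMap (ES n) ℝ,
        (∀ k, Integrable (fun x => u (tk k) x * φ x)) ∧
        ∃ A : ℝ, ∀ k, |∫ x, u (tk k) x * φ x| ≤ A) :
    ∃! u₀ : SchwartzMap (ES n) ℝ →L[ℝ] ℝ,
      ∀ t : ℝ, 0 < t → ENNReal.ofReal t < T →
        ∀ φ ψ : SchwartzMap (ES n) ℝ, (∀ x, ψ x = heatOp n t (⇑φ) x) →
          Integrable (fun x => u t x * φ x) ∧ (∫ x, u t x * φ x) = u₀ ψ := by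
  obtain ⟨tk, htk, htk0, hφ⟩ := hinit
  have hu : ContDiffOn ℝ (⊤ : ℕ∞) (fun p : ℝ × ES n => u p.1 p.2) (SS n T) := hu_smooth
  have hcont : ∀ t, 0 < t → ENNReal.ofReal t < T → Continuous (u t) := fun t h1 h2 =>
    (slice_smooth hu h1 h2).continuous
  have hI : ∀ k, ∀ φ : SchwartzMap (ES n) ℝ, Integrable (fun x => u (tk k) x * φ x) :=
    fun k φ => (hφ φ).1 k
  choose L hL using fun k => schwartz_pairing (u (tk k)) (hcont _ (htk k).1 (htk k).2) (hI k)
  have hLb : ∀ φ, ∃ A : ℝ, ∀ k, |L k φ| ≤ A := fun φ => by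
    obtain ⟨A, hA⟩ := (hφ φ).2
    exact ⟨A, fun k => by rw [hL]; exact hA k⟩
  obtain ⟨u₀, hu₀⟩ := ultra_limit L hLb
  have key : ∀ t : ℝ, 0 < t → ENNReal.ofReal t < T → ∀ k, tk k < t → ∀ φ : SchwartzMap (ES n) ℝ,
      Integrable (fun x => u t x * φ x) ∧ ∫ x, u t x * φ x = L k (hE (t - tk k) φ) := by
    intro t ht htT k hk φ
    have hr : 0 < t - tk k := sub_pos.2 hk
    rw [hL]
    exact pairing_heat (hcont _ (htk k).1 (htk k).2) (hI k) hr
      (fun x => repr_heat hγ hu hu_heat hsize (htk k).1 hk htT x (hk_int (hI k) hr x)) φ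
  have hev : ∀ t : ℝ, 0 < t → ∀ᶠ k in atTop, tk k < t := fun t ht =>
    htk0.eventually (gt_mem_nhds ht)
  refine ⟨u₀, ?_, ?_⟩
  · intro t ht htT φ ψ hψ
    have hψE : ψ = hE t φ := by
      ext x; rw [hψ, hE_heatOp ht]
    obtain ⟨k, hk⟩ := (hev t ht).exists
    refine ⟨(key t ht htT k hk φ).1, ?_⟩
    rw [hψE]
    refine (hu₀ (fun k => hE (t - tk k) φ) (hE t φ) _ ?_ ?_).symm
    · apply hE_tendsto
      simpa using htk0.const_sub t
    · filter_upwards [hev t ht] with k hk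
      exact (key t ht htT k hk φ).2.symm
  · intro u₁ hu₁
    ext φ
    have hsame : ∀ k, u₁ (hE (tk k) φ) = u₀ (hE (tk k) φ) := by
      intro k
      rw [← (hu₁ (tk k) (htk k).1 (htk k).2 φ _ (hE_heatOp (htk k).1 φ)).2]
      obtain ⟨j, hj⟩ := (hev (tk k) (htk k).1).exists
      refine (hu₀ (fun j => hE (tk k - tk j) φ) (hE (tk k) φ) _ ?_ ?_).symm
      · apply hE_tendsto
        simpa using htk0.const_sub (tk k)
      · filter_upwards [hev (tk k) (htk k).1] with j hj
        exact (key (tk k) (htk k).1 (htk k).2 j hj φ).2.symm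
    have hc := hE_tendsto φ tk 0 htk0
    rw [hE_zero] at hc
    have h1 := (u₁.continuous.tendsto φ).comp hc
    have h2 := (u₀.continuous.tendsto φ).comp hc
    refine tendsto_nhds_unique h1 (h2.congr fun k => ?_)
    exact (hsame k).symm

end
end

section
/- Let 0 < T ≤ ∞, let γ ∈ (0, 1/4), and let u be a smooth function on (0,T) × ℝⁿ solving the heat equation ∂ₜu = Δu, satisfying: for all 0 < a < b < T there exists C(a,b) > 0 such that for every R > 0, (∫ₐᵇ ∫_{B(0,R)} |u(t,x)|² dt dx)^{1/2} ≤ C(a,b)·exp(γR²/(b−a)); and there is a sequence (t_k) in (0,T) tending to 0 with (u(t_k)) bounded in 𝒮′(ℝⁿ). Let u₀ ∈ 𝒮′(ℝⁿ) be the distribution with u(t) = e^{tΔ}u₀ for all 0 < t < T. Then for every t ∈ (0,T), the function x ↦ u(t,x) defines a tempered distribution, and u(t) → u₀ in 𝒮′(ℝⁿ) as t → 0⁺, i.e. ∫_{ℝⁿ} u(t,x)φ(x) dx → ⟨u₀, φ⟩ for every φ ∈ 𝒮(ℝⁿ). -/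
open MeasureTheory Metric Filter Set
open scoped Real ENNReal Topology

noncomputable section

open SchwartzMap
open scoped FourierTransform InnerProductSpace

lemma aux_gauss_bound (a : ℝ) (ha : 0 < a) (M : ℕ) (r : ℝ) (hr : 0 ≤ r) :
    (1 + r) ^ M * Real.exp (-a * r ^ 2) ≤ M.factorial * Real.exp (1 + 1 / (4 * a)) := by
  have h1 : (1 + r) ^ M ≤ M.factorial * Real.exp (1 + r) := by
    have := Real.pow_div_factorial_le_exp (1 + r) (by positivity) M
    rw [div_le_iff₀ (by positivity)] at this
    linarith
  calc (1 + r) ^ M * Real.exp (-a * r ^ 2)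
      ≤ (M.factorial * Real.exp (1 + r)) * Real.exp (-a * r ^ 2) := by gcongr
    _ = M.factorial * Real.exp (1 + r + -a * r ^ 2) := by rw [mul_assoc, ← Real.exp_add]
    _ ≤ _ := by
      refine mul_le_mul_of_nonneg_left (Real.exp_le_exp.mpr ?_) (by positivity)
      have : 0 ≤ a * (r - 1 / (2 * a)) ^ 2 := by positivity
      have h2 : a * (r - 1 / (2 * a)) ^ 2 = a * r ^ 2 - r + 1 / (4 * a) := by
        field_simp; ring
      linarith

lemma aux_gauss_temp (n : ℕ) (a : ℝ) :
    (fun x : ES n => -a * ‖x‖ ^ 2).HasTemperateGrowth := by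
  fun_prop

lemma aux_gauss_decay (n : ℕ) (a : ℝ) (ha : 0 < a) (k l : ℕ) :
    ∃ C : ℝ, ∀ x : ES n,
      ‖x‖ ^ k * ‖iteratedFDeriv ℝ l (fun x : ES n => Real.exp (-a * ‖x‖ ^ 2)) x‖ ≤ C := by
  obtain ⟨K, C, hC, h⟩ := (aux_gauss_temp n a).norm_iteratedFDeriv_le_uniform l
  refine ⟨l.factorial * (C + 1) ^ l * ((k + K * l).factorial * Real.exp (1 + 1 / (4 * a))),
    fun x => ?_⟩
  have h1 : (1 : ℝ) ≤ 1 + ‖x‖ := by linarith [norm_nonneg x]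
  have hD1 : 1 ≤ (C + 1) * (1 + ‖x‖) ^ K :=
    one_le_mul_of_one_le_of_one_le (by linarith) (one_le_pow₀ h1)
  have key := norm_iteratedFDeriv_comp_le (𝕜 := ℝ) (g := Real.exp)
    (f := fun x : ES n => -a * ‖x‖ ^ 2) (n := l) (N := (⊤ : ℕ∞))
    (Real.contDiff_exp) ((aux_gauss_temp n a).1) (by exact_mod_cast le_top) x
    (C := Real.exp (-a * ‖x‖ ^ 2)) (D := (C + 1) * (1 + ‖x‖) ^ K)
    (by
      intro i _
      rw [norm_iteratedFDeriv_eq_norm_iteratedDeriv, iteratedDeriv_eq_iterate,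
        Real.iter_deriv_exp]
      simp)
    (by
      intro i hi hil
      refine (h i hil x).trans (le_trans ?_ (le_self_pow₀ hD1 (by omega)))
      gcongr; linarith)
  have e : (Real.exp ∘ fun x : ES n => -a * ‖x‖ ^ 2) = fun x : ES n => Real.exp (-a * ‖x‖ ^ 2) := rfl
  rw [e] at key
  calc ‖x‖ ^ k * ‖iteratedFDeriv ℝ l (fun x : ES n => Real.exp (-a * ‖x‖ ^ 2)) x‖
      ≤ (1 + ‖x‖) ^ k * (l.factorial * Real.exp (-a * ‖x‖ ^ 2) * ((C + 1) * (1 + ‖x‖) ^ K) ^ l) := by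
        gcongr; linarith
    _ = l.factorial * (C + 1) ^ l * ((1 + ‖x‖) ^ (k + K * l) * Real.exp (-a * ‖x‖ ^ 2)) := by
        rw [pow_add, pow_mul, mul_pow]; ring
    _ ≤ _ := by
        exact mul_le_mul_of_nonneg_left (aux_gauss_bound a ha _ _ (norm_nonneg x)) (by positivity)

/-- The Gaussian as a Schwartz function. -/
def gaussS (n : ℕ) (a : ℝ) (ha : 0 < a) : SchwartzMap (ES n) ℝ where
  toFun := fun x => Real.exp (-a * ‖x‖ ^ 2)
  smooth' := Real.contDiff_exp.comp (aux_gauss_temp n a).1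
  decay' := aux_gauss_decay n a ha

lemma gaussS_apply (n : ℕ) (a : ℝ) (ha : 0 < a) (x : ES n) :
    gaussS n a ha x = Real.exp (-a * ‖x‖ ^ 2) := rfl

lemma gaussS_scale (n : ℕ) (a : ℝ) (ha : 0 < a) (j : ℕ) (x : ES n) :
    ‖iteratedFDeriv ℝ j (gaussS n a ha) x‖ ≤
      (Real.sqrt a) ^ j * SchwartzMap.seminorm ℝ 0 j (gaussS n 1 one_pos) := by
  have e : (gaussS n a ha : ES n → ℝ) = fun z => gaussS n 1 one_pos (Real.sqrt a • z) := by
    ext z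
    rw [gaussS_apply, gaussS_apply, norm_smul, mul_pow, Real.norm_eq_abs, sq_abs,
      Real.sq_sqrt ha.le]
    ring_nf
  rw [e, iteratedFDeriv_comp_const_smul (i := j) _ ((gaussS n 1 one_pos).smooth j), norm_smul,
    norm_pow, Real.norm_eq_abs, abs_of_nonneg (Real.sqrt_nonneg a)]
  gcongr
  simpa using SchwartzMap.le_seminorm ℝ 0 j (gaussS n 1 one_pos) (Real.sqrt a • x)

/-- multiplication by Gaussian -/
lemma gauss_mul_bound (n : ℕ) (g : ES n → ℝ) (hg : g.HasTemperateGrowth) (f : SchwartzMap (ES n) ℂ)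
    (l : ℕ) (x : ES n) :
    ‖iteratedFDeriv ℝ l (SchwartzMap.smulLeftCLM ℂ g f) x‖ ≤
      ∑ i ∈ Finset.range (l + 1),
      (l.choose i : ℝ) * ‖iteratedFDeriv ℝ i g x‖ * ‖iteratedFDeriv ℝ (l - i) f x‖ := by
  rw [SchwartzMap.smulLeftCLM_apply hg]
  exact norm_iteratedFDeriv_smul_le (N := (⊤ : ℕ∞)) hg.1 f.smooth' x (by exact_mod_cast le_top)

lemma gauss_mul_tendsto (n : ℕ) (f : SchwartzMap (ES n) ℂ) (k l : ℕ) :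
    ∃ B : ℝ, 0 ≤ B ∧ ∀ a (ha : 0 < a), a ≤ 1 →
      SchwartzMap.seminorm ℝ k l (SchwartzMap.smulLeftCLM ℂ (gaussS n a ha) f - f) ≤
        Real.sqrt a * B := by
  let b : ℕ → ℝ := fun i => if i = 0 then SchwartzMap.seminorm ℝ (k + 2) l f else
    (l.choose i : ℝ) * SchwartzMap.seminorm ℝ 0 i (gaussS n 1 one_pos) *
      SchwartzMap.seminorm ℝ k (l - i) f
  have hb : ∀ i, 0 ≤ b i := by
    intro i; dsimp only [b]; split_ifs <;> positivity
  refine ⟨∑ i ∈ Finset.range (l + 1), b i, Finset.sum_nonneg fun i _ => hb i, ?_⟩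
  intro a ha ha1
  have hs1 : Real.sqrt a ≤ 1 := Real.sqrt_le_one.mpr ha1
  have hs0 := Real.sqrt_nonneg a
  have has : a ≤ Real.sqrt a := by
    nth_rewrite 1 [← Real.mul_self_sqrt ha.le]; nlinarith
  have hgt := (gaussS n a ha).hasTemperateGrowth
  have hct : (fun _ : ES n => (1 : ℝ)).HasTemperateGrowth := by fun_prop
  have e : SchwartzMap.smulLeftCLM ℂ (gaussS n a ha) f - f =
      SchwartzMap.smulLeftCLM ℂ (⇑(gaussS n a ha) - fun _ => (1 : ℝ)) f := by
    rw [SchwartzMap.smulLeftCLM_sub hgt hct]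
    simp
  rw [e]
  refine SchwartzMap.seminorm_le_bound ℝ k l _
    (mul_nonneg hs0 (Finset.sum_nonneg fun i _ => hb i)) fun x => ?_
  refine (mul_le_mul_of_nonneg_left (gauss_mul_bound n _ (hgt.sub hct) f l x)
    (by positivity)).trans ?_
  rw [Finset.mul_sum, Finset.mul_sum]
  refine Finset.sum_le_sum fun i _ => ?_
  dsimp only [b]
  split_ifs with hi
  · subst hi
    have h0 : ‖iteratedFDeriv ℝ 0 (⇑(gaussS n a ha) - fun _ => (1 : ℝ)) x‖ ≤ a * ‖x‖ ^ 2 := by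
      rw [norm_iteratedFDeriv_zero, Pi.sub_apply, gaussS_apply, Real.norm_eq_abs, abs_sub_comm,
        abs_of_nonneg]
      · have := Real.add_one_le_exp (-a * ‖x‖ ^ 2)
        linarith
      · have : Real.exp (-a * ‖x‖ ^ 2) ≤ 1 := Real.exp_le_one_iff.mpr (by
          have : 0 ≤ a * ‖x‖ ^ 2 := by positivity
          linarith)
        linarith
    have h2 := SchwartzMap.le_seminorm ℝ (k + 2) l f x
    simp only [Nat.choose_zero_right, Nat.cast_one, one_mul, Nat.sub_zero]
    calc ‖x‖ ^ k * (‖iteratedFDeriv ℝ 0 (⇑(gaussS n a ha) - fun _ => (1 : ℝ)) x‖ *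
          ‖iteratedFDeriv ℝ l f x‖)
        ≤ ‖x‖ ^ k * ((a * ‖x‖ ^ 2) * ‖iteratedFDeriv ℝ l f x‖) := by gcongr
      _ = a * (‖x‖ ^ (k + 2) * ‖iteratedFDeriv ℝ l f x‖) := by ring
      _ ≤ _ := by gcongr
  · have h0 : ‖iteratedFDeriv ℝ i (⇑(gaussS n a ha) - fun _ => (1 : ℝ)) x‖ ≤
        Real.sqrt a * SchwartzMap.seminorm ℝ 0 i (gaussS n 1 one_pos) := by
      rw [iteratedFDeriv_sub_apply ((gaussS n a ha).smooth i).contDiffAt contDiffAt_const,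
        iteratedFDeriv_const_of_ne hi]
      simp only [Pi.zero_apply, sub_zero]
      refine (gaussS_scale n a ha i x).trans ?_
      gcongr
      exact pow_le_of_le_one hs0 hs1 hi
    have h2 := SchwartzMap.le_seminorm ℝ k (l - i) f x
    calc ‖x‖ ^ k * ((l.choose i : ℝ) * ‖iteratedFDeriv ℝ i (⇑(gaussS n a ha) - fun _ => (1 : ℝ)) x‖ *
          ‖iteratedFDeriv ℝ (l - i) f x‖)
        = (l.choose i : ℝ) * ‖iteratedFDeriv ℝ i (⇑(gaussS n a ha) - fun _ => (1 : ℝ)) x‖ *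
          (‖x‖ ^ k * ‖iteratedFDeriv ℝ (l - i) f x‖) := by ring
      _ ≤ (l.choose i : ℝ) * (Real.sqrt a * SchwartzMap.seminorm ℝ 0 i (gaussS n 1 one_pos)) *
          (SchwartzMap.seminorm ℝ k (l - i) f) := by gcongr
      _ = _ := by ring

/-- Complexify and take the Fourier transform. -/
def toF (n : ℕ) : SchwartzMap (ES n) ℝ →L[ℝ] SchwartzMap (ES n) ℂ :=
  (FourierTransform.fourierCLM ℝ (SchwartzMap (ES n) ℂ)).comp
    (SchwartzMap.postcompCLM Complex.ofRealCLM)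

/-- Inverse Fourier transform, real part. -/
def ofF (n : ℕ) : SchwartzMap (ES n) ℂ →L[ℝ] SchwartzMap (ES n) ℝ :=
  (SchwartzMap.postcompCLM Complex.reCLM).comp
    (FourierTransform.fourierInvCLM ℝ (SchwartzMap (ES n) ℂ))

lemma toF_coe (n : ℕ) (φ : SchwartzMap (ES n) ℝ) :
    (toF n φ : ES n → ℂ) = 𝓕 (fun x => (φ x : ℂ)) := rfl

lemma ofF_apply (n : ℕ) (h : SchwartzMap (ES n) ℂ) (x : ES n) :
    ofF n h x = (𝓕⁻ (h : ES n → ℂ) x).re := by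
  rw [← SchwartzMap.fourierInv_coe]
  rfl

lemma ofF_toF (n : ℕ) (φ : SchwartzMap (ES n) ℝ) : ofF n (toF n φ) = φ := by
  simp only [ofF, toF, ContinuousLinearMap.comp_apply, FourierTransform.fourierCLM_apply,
    FourierTransform.fourierInvCLM_apply, FourierTransform.fourierInv_fourier_eq]
  ext x
  simp

lemma heat_identity (n : ℕ) (t : ℝ) (ht : 0 < t) (ha : 0 < 4 * π ^ 2 * t)
    (φ : SchwartzMap (ES n) ℝ) (x : ES n) :
    ofF n (SchwartzMap.smulLeftCLM ℂ (gaussS n (4 * π ^ 2 * t) ha) (toF n φ)) x =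
      heatOp n t φ x := by
  rw [ofF_apply]
  have hb : 0 < ((4 * π ^ 2 * t : ℝ) : ℂ).re := by rw [Complex.ofReal_re]; exact ha
  suffices h : 𝓕⁻ (SchwartzMap.smulLeftCLM ℂ (gaussS n (4 * π ^ 2 * t) ha) (toF n φ) : ES n → ℂ) x
      = ((heatOp n t φ x : ℝ) : ℂ) by
    rw [h]; simp
  have J : Integrable (fun w : ES n => Complex.exp (- ((4 * π ^ 2 * t : ℝ) : ℂ) * ‖w‖ ^ 2
      + 2 * π * Complex.I * ⟪x, w⟫_ℝ)) :=
    GaussianFourier.integrable_cexp_neg_mul_sq_norm_add hb _ _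
  have hφ : Integrable (fun x : ES n => (φ x : ℂ)) := φ.integrable.ofReal
  have flip := (VectorFourier.integral_fourierIntegral_smul_eq_flip (L := innerₗ (ES n))
      Real.continuous_fourierChar continuous_inner J hφ)
  have flip2 : ∫ y, (𝓕 (fun w : ES n => Complex.exp (- ((4 * π ^ 2 * t : ℝ) : ℂ) * ‖w‖ ^ 2
      + 2 * π * Complex.I * ⟪x, w⟫_ℝ)) y) • (φ y : ℂ) =
      ∫ w : ES n, Complex.exp (- ((4 * π ^ 2 * t : ℝ) : ℂ) * ‖w‖ ^ 2
      + 2 * π * Complex.I * ⟪x, w⟫_ℝ) • 𝓕 (fun x => (φ x : ℂ)) w := by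
    simpa using! flip
  rw [Real.fourierInv_eq']
  have e1 : ∀ v : ES n, Complex.exp (↑(2 * π * ⟪v, x⟫_ℝ) * Complex.I) •
      (SchwartzMap.smulLeftCLM ℂ (gaussS n (4 * π ^ 2 * t) ha) (toF n φ)) v =
      Complex.exp (- ((4 * π ^ 2 * t : ℝ) : ℂ) * ‖v‖ ^ 2
      + 2 * π * Complex.I * ⟪x, v⟫_ℝ) • 𝓕 (fun x => (φ x : ℂ)) v := by
    intro v
    rw [SchwartzMap.smulLeftCLM_apply_apply (gaussS n _ ha).hasTemperateGrowth, gaussS_apply,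
      toF_coe, Complex.exp_add, real_inner_comm v x, Complex.real_smul, smul_eq_mul, smul_eq_mul]
    push_cast
    ring_nf
  simp_rw [e1]
  rw [← flip2, heatOp, ← integral_complex_ofReal]
  refine integral_congr_ae (Eventually.of_forall fun y => ?_)
  simp only
  rw [fourier_gaussian_innerProductSpace' hb, smul_eq_mul]
  push_cast
  congr 1
  congr 1
  · rw [show -(n : ℝ) / 2 = -((n : ℝ) / 2) by ring, Real.rpow_neg (by positivity),
      ← Real.inv_rpow (by positivity), Complex.ofReal_cpow (by positivity)]
    push_cast
    rw [finrank_euclideanSpace_fin]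
    congr 1
    have : (π : ℂ) ≠ 0 := by exact_mod_cast Real.pi_ne_zero
    have : (t : ℂ) ≠ 0 := by exact_mod_cast ht.ne'
    field_simp
  · congr 1
    have : (π : ℂ) ≠ 0 := by exact_mod_cast Real.pi_ne_zero
    have : (t : ℂ) ≠ 0 := by exact_mod_cast ht.ne'
    field_simp

lemma toF_deriv_bound (n : ℕ) (φ : SchwartzMap (ES n) ℝ) (j N : ℕ) (hj : j ≤ N) (w : ES n) :
    ‖iteratedFDeriv ℝ j (toF n φ) w‖ ≤
      (2 * π) ^ j * (j + 1) * ∫ v, (1 + ‖v‖) ^ N * |φ v| := by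
  let Φ : SchwartzMap (ES n) ℂ := SchwartzMap.postcompCLM Complex.ofRealCLM φ
  have hΦ : ∀ v, ‖Φ v‖ = |φ v| := by intro v; simp [Φ]
  have h := Real.pow_mul_norm_iteratedFDeriv_fourier_le (f := (Φ : ES n → ℂ)) (K := ⊤) (N := ⊤)
    Φ.smooth' (fun k m _ _ => Φ.integrable_pow_mul_iteratedFDeriv volume k m)
    (k := j) (n := 0) le_top le_top w
  rw [toF_coe]
  have hint : Integrable (fun v => (1 + ‖v‖) ^ N * |φ v|) := by
    have : ∀ v : ES n, (1 + ‖v‖) ^ N * |φ v| =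
        ∑ m ∈ Finset.range (N + 1), (N.choose m : ℝ) * (‖v‖ ^ m * ‖φ v‖) := by
      intro v
      rw [add_comm, add_pow, Finset.sum_mul]
      refine Finset.sum_congr rfl fun m _ => ?_
      rw [Real.norm_eq_abs]; ring
    simp_rw [this]
    exact integrable_finsetSum _ fun m _ => (φ.integrable_pow_mul volume m).const_mul _
  simp only [pow_zero, one_mul, mul_one, zero_add, Finset.range_one, Finset.sum_product,
    Finset.sum_singleton, norm_iteratedFDeriv_zero, hΦ] at h
  refine h.trans ?_
  rw [mul_assoc]
  gcongr
  calc ∑ m ∈ Finset.range (j + 1), ∫ v, ‖v‖ ^ m * |φ v|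
      ≤ ∑ m ∈ Finset.range (j + 1), ∫ v, (1 + ‖v‖) ^ N * |φ v| := by
        refine Finset.sum_le_sum fun m hm => ?_
        refine integral_mono (by simpa using φ.integrable_pow_mul volume m) hint fun v => ?_
        have h1 : (1 : ℝ) ≤ 1 + ‖v‖ := by linarith [norm_nonneg v]
        have : m ≤ N := by have := Finset.mem_range.mp hm; omega
        dsimp only
        gcongr
        exact (pow_le_pow_left₀ (norm_nonneg v) (by linarith) m).trans (pow_le_pow_right₀ h1 this)
    _ = _ := by simp

lemma growth_functional (n : ℕ) (L : SchwartzMap (ES n) ℂ →L[ℝ] ℝ) (g : SchwartzMap (ES n) ℝ) :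
    ∃ (C : ℝ) (N : ℕ), 0 ≤ C ∧ ∀ φ : SchwartzMap (ES n) ℝ,
      |L (SchwartzMap.smulLeftCLM ℂ g (toF n φ))| ≤ C * ∫ v, (1 + ‖v‖) ^ N * |φ v| := by
  obtain ⟨s, C, -, h⟩ := Seminorm.bound_of_continuous (schwartz_withSeminorms ℝ (ES n) ℂ)
    ((normSeminorm ℝ ℝ).comp (L : SchwartzMap (ES n) ℂ →ₗ[ℝ] ℝ)) (L.continuous.norm)
  let N := s.sup Prod.snd
  let D : ℕ × ℕ → ℝ := fun p => ∑ i ∈ Finset.range (p.2 + 1), (p.2.choose i : ℝ) *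
    SchwartzMap.seminorm ℝ p.1 i g * ((2 * π) ^ (p.2 - i) * ((p.2 - i : ℕ) + 1))
  have hD : ∀ p, 0 ≤ D p := fun p => Finset.sum_nonneg fun i _ => by positivity
  refine ⟨C * ∑ p ∈ s, D p, N, mul_nonneg C.2 (Finset.sum_nonneg fun p _ => hD p), fun φ => ?_⟩
  set I := ∫ v, (1 + ‖v‖) ^ N * |φ v| with hI
  have hI0 : 0 ≤ I := integral_nonneg fun v => by positivity
  have h1 := h (SchwartzMap.smulLeftCLM ℂ g (toF n φ))
  have h2 : |L (SchwartzMap.smulLeftCLM ℂ g (toF n φ))| ≤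
    C * (s.sup (schwartzSeminormFamily ℝ (ES n) ℂ)) (SchwartzMap.smulLeftCLM ℂ g (toF n φ)) := h1
  refine h2.trans ?_
  rw [mul_assoc]
  refine mul_le_mul_of_nonneg_left ?_ C.2
  refine Seminorm.finset_sup_apply_le (mul_nonneg (Finset.sum_nonneg fun p _ => hD p) hI0) ?_
  intro p hp
  refine le_trans ?_ (mul_le_mul_of_nonneg_right
    (Finset.single_le_sum (f := D) (fun p _ => hD p) hp) hI0)
  refine SchwartzMap.seminorm_le_bound ℝ p.1 p.2 _ (mul_nonneg (hD p) hI0) fun x => ?_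
  refine (mul_le_mul_of_nonneg_left (gauss_mul_bound n _ g.hasTemperateGrowth (toF n φ) p.2 x)
    (by positivity)).trans ?_
  rw [Finset.mul_sum, Finset.sum_mul]
  refine Finset.sum_le_sum fun i _ => ?_
  have hN : p.2 ≤ N := Finset.le_sup (f := Prod.snd) hp
  have h3 := toF_deriv_bound n φ (p.2 - i) N (by omega) x
  have h4 := SchwartzMap.le_seminorm ℝ p.1 i g x
  calc ‖x‖ ^ p.1 * ((p.2.choose i : ℝ) * ‖iteratedFDeriv ℝ i g x‖ *
        ‖iteratedFDeriv ℝ (p.2 - i) (toF n φ) x‖)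
      = (p.2.choose i : ℝ) * (‖x‖ ^ p.1 * ‖iteratedFDeriv ℝ i g x‖) *
        ‖iteratedFDeriv ℝ (p.2 - i) (toF n φ) x‖ := by ring
    _ ≤ (p.2.choose i : ℝ) * (SchwartzMap.seminorm ℝ p.1 i g) *
        ((2 * π) ^ (p.2 - i) * ((p.2 - i : ℕ) + 1) * I) := by gcongr
    _ = _ := by ring

lemma int_growth (n : ℕ) (φ : SchwartzMap (ES n) ℝ) (N : ℕ) :
    Integrable (fun v => (1 + ‖v‖) ^ N * |φ v|) := by
  have : ∀ v : ES n, (1 + ‖v‖) ^ N * |φ v| =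
      ∑ m ∈ Finset.range (N + 1), (N.choose m : ℝ) * (‖v‖ ^ m * ‖φ v‖) := by
    intro v
    rw [add_comm, add_pow, Finset.sum_mul]
    refine Finset.sum_congr rfl fun m _ => ?_
    rw [Real.norm_eq_abs]; ring
  simp_rw [this]
  exact integrable_finsetSum _ fun m _ => (φ.integrable_pow_mul volume m).const_mul _

lemma ptwise_bound (n : ℕ) (w : ES n → ℝ) (hw : Continuous w) (q : ES n → ℝ) (hq : Continuous q)
    (h : ∀ φ : SchwartzMap (ES n) ℝ, HasCompactSupport φ → (∀ x, 0 ≤ φ x) →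
      ∫ x, w x * φ x ≤ ∫ x, q x * φ x) (x : ES n) : w x ≤ q x := by
  by_contra hx
  push Not at hx
  have hopen : IsOpen {y | q y < w y} := isOpen_lt hq hw
  obtain ⟨r, hr, hrb⟩ := Metric.isOpen_iff.mp hopen x hx
  let f : ContDiffBump x := ⟨r / 2, r, by positivity, by linarith⟩
  let φ : SchwartzMap (ES n) ℝ := f.hasCompactSupport.toSchwartzMap f.contDiff
  have hφ : ∀ y, φ y = f y := fun y => rfl
  have hc : HasCompactSupport φ := f.hasCompactSupport
  have h1 := h φ hc (fun y => f.nonneg)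
  have i1 : Integrable (fun y => w y * φ y) :=
    (hw.mul φ.continuous).integrable_of_hasCompactSupport hc.mul_left
  have i2 : Integrable (fun y => q y * φ y) :=
    (hq.mul φ.continuous).integrable_of_hasCompactSupport hc.mul_left
  have h2 : 0 < ∫ y, (w y - q y) * φ y := by
    have hcont : Continuous fun y => (w y - q y) * φ y := (hw.sub hq).mul φ.continuous
    refine hcont.integral_pos_of_hasCompactSupport_nonneg_nonzero hc.mul_left (x := x) ?_ ?_
    · intro y
      by_cases hy : y ∈ ball x r
      · have : q y < w y := hrb hy
        exact mul_nonneg (by linarith) f.nonneg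
      · have : f y = 0 := f.zero_of_le_dist (by simpa using hy)
        simp [hφ, this]
    · have : f x = 1 := f.one_of_mem_closedBall (by simp [f.rIn_pos.le])
      rw [hφ, this]
      have : q x < w x := hx
      simp only [mul_one]; linarith
  simp_rw [sub_mul] at h2
  rw [integral_sub i1 i2] at h2
  linarith

/-- Under the hypotheses of the representation theorem, with `u₀` the tempered distribution
such that `u(t) = e^{tΔ}u₀` for `0 < t < T`: for each `t ∈ (0,T)` the function `x ↦ u(t,x)`
defines a tempered distribution, and `u(t) → u₀` in `𝒮'(ℝⁿ)` as `t → 0⁺`, i.e.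
`∫ u(t,x)φ(x) dx → ⟨u₀, φ⟩` for every Schwartz `φ`. -/
theorem heat_initial_continuity
    (n : ℕ) (T : ℝ≥0∞) (hT : 0 < T) (γ : ℝ) (hγ : γ ∈ Set.Ioo (0 : ℝ) (1/4))
    (u : ℝ → ES n → ℝ)
    (hu_smooth : ContDiffOn ℝ (⊤ : ℕ∞) (fun p : ℝ × ES n => u p.1 p.2)
      {p : ℝ × ES n | 0 < p.1 ∧ ENNReal.ofReal p.1 < T})
    (hu_heat : ∀ (t : ℝ) (x : ES n), 0 < t → ENNReal.ofReal t < T →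
      HasDerivAt (fun τ => u τ x) (heatLap n (u t) x) t)
    -- Size condition
    (hsize : ∀ a b : ℝ, 0 < a → a < b → ENNReal.ofReal b < T → ∃ C > 0, ∀ R > 0,
      Real.sqrt (∫ t in Set.Ioo a b, ∫ x in Metric.ball (0 : ES n) R, (u t x) ^ 2) ≤
        C * Real.exp (γ * R ^ 2 / (b - a)))
    -- Uniform control
    (hinit : ∃ tk : ℕ → ℝ, (∀ k, 0 < tk k ∧ ENNReal.ofReal (tk k) < T) ∧
      Tendsto tk atTop (nhds 0) ∧
      ∀ φ : SchwartzMap (ES n) ℝ,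
        (∀ k, Integrable (fun x => u (tk k) x * φ x)) ∧
        ∃ A : ℝ, ∀ k, |∫ x, u (tk k) x * φ x| ≤ A)
    -- u₀ is the tempered distribution with u(t) = e^{tΔ}u₀ for all 0 < t < T
    (u₀ : SchwartzMap (ES n) ℝ →L[ℝ] ℝ)
    (hu₀ : ∀ t : ℝ, 0 < t → ENNReal.ofReal t < T →
      ∀ φ ψ : SchwartzMap (ES n) ℝ, (∀ x, ψ x = heatOp n t (⇑φ) x) →
        (∫ x, u t x * φ x) = u₀ ψ) :
    (∀ t : ℝ, 0 < t → ENNReal.ofReal t < T →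
      ∃ v : SchwartzMap (ES n) ℝ →L[ℝ] ℝ, ∀ φ : SchwartzMap (ES n) ℝ,
        Integrable (fun x => u t x * φ x) ∧ v φ = ∫ x, u t x * φ x) ∧
    (∀ φ : SchwartzMap (ES n) ℝ,
      Tendsto (fun t => ∫ x, u t x * φ x) (nhdsWithin 0 (Set.Ioi 0)) (nhds (u₀ φ))) := by
  have hpos : ∀ t : ℝ, 0 < t → 0 < 4 * π ^ 2 * t := fun t ht => by positivity
  have key : ∀ t : ℝ, ∀ ht : 0 < t, ENNReal.ofReal t < T → ∀ φ : SchwartzMap (ES n) ℝ,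
      (∫ x, u t x * φ x) = (u₀.comp (ofF n))
        (SchwartzMap.smulLeftCLM ℂ (gaussS n (4 * π ^ 2 * t) (hpos t ht)) (toF n φ)) :=
    fun t ht htT φ => hu₀ t ht htT φ _ fun x => heat_identity n t ht (hpos t ht) φ x
  refine ⟨fun t ht htT => ?_, fun φ => ?_⟩
  · have hcont : Continuous (u t) := by
      have h1 := hu_smooth.continuousOn
      have h2 : Continuous fun x : ES n => ((t, x) : ℝ × ES n) := by fun_prop
      exact h1.comp_continuous h2 fun x => ⟨ht, htT⟩
    obtain ⟨C, N, hC, hb⟩ := growth_functional n (u₀.comp (ofF n))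
      (gaussS n (4 * π ^ 2 * t) (hpos t ht))
    have hqc : Continuous fun x : ES n => C * (1 + ‖x‖) ^ N := by fun_prop
    have hb2 : ∀ φ : SchwartzMap (ES n) ℝ, (∀ x, 0 ≤ φ x) →
        |∫ x, u t x * φ x| ≤ ∫ x, C * (1 + ‖x‖) ^ N * φ x := by
      intro φ h0
      rw [key t ht htT φ]
      refine (hb φ).trans (le_of_eq ?_)
      rw [← integral_const_mul]
      refine integral_congr_ae (Eventually.of_forall fun v => ?_)
      simp only [abs_of_nonneg (h0 v)]
      ring
    have hup := ptwise_bound n (u t) hcont _ hqc fun φ _ h0 => (abs_le.mp (hb2 φ h0)).2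
    have hdn := ptwise_bound n (fun x => - u t x) hcont.neg _ hqc fun φ _ h0 => by
      have := (abs_le.mp (hb2 φ h0)).1
      simp only [neg_mul, integral_neg]
      linarith
    refine ⟨(u₀.comp (ofF n)).comp (((SchwartzMap.smulLeftCLM ℂ
      (gaussS n (4 * π ^ 2 * t) (hpos t ht)))).comp (toF n)), fun φ => ⟨?_, ?_⟩⟩
    · refine ((int_growth n φ N).const_mul C).mono'
        (hcont.mul φ.continuous).aestronglyMeasurable (Eventually.of_forall fun x => ?_)
      rw [norm_mul, Real.norm_eq_abs, Real.norm_eq_abs, ← mul_assoc]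
      gcongr
      exact abs_le.mpr ⟨by linarith [hdn x], hup x⟩
    · rw [key t ht htT φ]
      rfl
  · have hev : ∀ᶠ t : ℝ in 𝓝[>] 0, ENNReal.ofReal t < T := by
      have : Tendsto (fun t : ℝ => ENNReal.ofReal t) (𝓝[>] 0) (𝓝 (ENNReal.ofReal 0)) :=
        (ENNReal.continuous_ofReal.tendsto 0).mono_left nhdsWithin_le_nhds
      rw [ENNReal.ofReal_zero] at this
      exact this.eventually (gt_mem_nhds hT)
    let G : ℝ → SchwartzMap (ES n) ℂ := fun t => if ht : 0 < t then
      SchwartzMap.smulLeftCLM ℂ (gaussS n (4 * π ^ 2 * t) (hpos t ht)) (toF n φ) else 0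
    have hG : Tendsto G (𝓝[>] 0) (𝓝 (toF n φ)) := by
      rw [(schwartz_withSeminorms ℝ (ES n) ℂ).tendsto_nhds]
      rintro ⟨k, l⟩ ε hε
      obtain ⟨B, hB, hbd⟩ := gauss_mul_tendsto n (toF n φ) k l
      have c1 : Tendsto (fun t : ℝ => Real.sqrt (4 * π ^ 2 * t) * B) (𝓝[>] 0) (𝓝 0) := by
        have : Continuous fun t : ℝ => Real.sqrt (4 * π ^ 2 * t) * B := by fun_prop
        simpa using (this.tendsto 0).mono_left (nhdsWithin_le_nhds (s := Set.Ioi 0))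
      have c2 : Tendsto (fun t : ℝ => 4 * π ^ 2 * t) (𝓝[>] 0) (𝓝 0) := by
        have : Continuous fun t : ℝ => 4 * π ^ 2 * t := by fun_prop
        simpa using (this.tendsto 0).mono_left (nhdsWithin_le_nhds (s := Set.Ioi 0))
      filter_upwards [c1.eventually (gt_mem_nhds hε), c2.eventually (gt_mem_nhds one_pos),
        self_mem_nhdsWithin] with t h1 h2 h3
      have h3' : 0 < t := h3
      simp only [G, dif_pos h3']
      exact (hbd _ (hpos t h3') h2.le).trans_lt h1
    have hlim : Tendsto (fun t => (u₀.comp (ofF n)) (G t)) (𝓝[>] 0) (𝓝 (u₀ φ)) := by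
      have := ((u₀.comp (ofF n)).continuous.tendsto (toF n φ)).comp hG
      rwa [ContinuousLinearMap.comp_apply, ofF_toF] at this
    refine hlim.congr' ?_
    filter_upwards [hev, self_mem_nhdsWithin] with t h1 h3
    have h3' : 0 < t := h3
    simp only [G, dif_pos h3']
    exact (key t h3' h1 φ).symm

end
end
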